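/- Let q = p^f be a power of a prime p, let k > 0 and d ≥ 0. Then the power sum S_d(-k) = Σ_{a monic of degree d in F_q[t]} a^k is zero if and only if d > L_k. -/

import Mathlib

/-!
Write `k = ∑ dg j * p ^ j` in base `p` and expand `(∑ c i * X ^ i) ^ k` by Frobenius powers and one
multinomial expansion per digit. Summing over the coefficients `c i ∈ F`, `i < d`, leaves a sum
of monomials indexed by the matrices `μ` that split the digits of `k` among the indices `0, …, d`
such that for `i < d` the column value `m i = ∑ μ j i * p ^ j` is positive and divisible by `q - 1`
(`Sheats.Good`). Every such matrix contributes a nonzero multiple of `X ^ (∑ i * m i)`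
(`Sheats.powerSum_expand`, `Sheats.coef_ne_zero_iff`).

If a good matrix exists, each of its `d` columns contributes at least `q - 1` to the digit sum
`l (k * p ^ i)` for every `i`, hence `d ≤ L_k` (`Sheats.Good.rotSum_ge`). So the power sum
vanishes when `d > L_k`.

The converse is Sheats' theorem. For `d ≤ L_k` good matrices exist, and it has to be shown that
the largest exponent of `X` is attained by only one of them (`Sheats.exists_unique_good`), so that no
cancellation occurs. Dividing the rotated digit sums of the first `h` columns by `q - 1` turns a
good matrix into a chain `0 = B 0 < B 1 < ⋯ < B d` of integer vectors indexed by `ZMod f`. The vector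
`B h` records how many powers `p ^ j` with `j ≡ s` modulo `f` are used, namely
`p * B h s - B h (s - 1)`, and maximizing the exponent means minimizing the total cost
`∑ cost (B h)`, where `cost` is the least value realizable with these counts.

The minimizer is the greedy chain, built downwards from level `d` by always taking the cheapest
vector between the constant `h` and the level above (`Sheats.Profile.greedy_optimal`). By induction
an optimal chain is itself levelwise cheapest below its top level, so it suffices to compare the
greedy chain with such a competitor (`Sheats.Profile.Duel`). Exchange arguments, which replace a pair
of vectors by their minimum and maximum or move a push vector from one to the other, show that the
chains interlace and that at each position the competitor saves, over all levels together, at most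
`p - 1` atoms (`Sheats.Profile.Duel.lower_bound`). At the highest position where the two chains
differ the competitor spends strictly more (`Sheats.Profile.Duel.no_state`). Since a combination of
powers of `p` with coefficients at least `-(p - 1)` and positive leading coefficient is positive, the
competitor is more expensive.
-/

open Polynomial

open scoped Classical

/-- The monic polynomial `X^d + c_{d-1} X^{d-1} + ... + c_0` determined by its lower
coefficients `c : Fin d → F`; these parametrize the monic polynomials of degree `d`. -/
noncomputable def monicPoly (F : Type) [Field F] (d : ℕ) (c : Fin d → F) : F[X] :=
  X ^ d + ∑ i : Fin d, C (c i) * X ^ (i : ℕ)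

/-- `S_d(-k) = Σ_{a monic of degree d} a^k`. -/
noncomputable def powerSum (F : Type) [Field F] [Fintype F] (d k : ℕ) : F[X] :=
  ∑ c : Fin d → F, monicPoly F d c ^ k

/-- `S̃_d(-k) = Σ_{a monic of degree d, v ∤ a} a^k`. -/
noncomputable def rPowerSum (F : Type) [Field F] [Fintype F] (v : F[X]) (d k : ℕ) : F[X] :=
  ∑ c : Fin d → F, if v ∣ monicPoly F d c then 0 else monicPoly F d c ^ k

/-- `∑ i, m i = k` with no carrying of base-`p` digits. -/
def NoCarry (p : ℕ) {n : ℕ} (m : Fin n → ℕ) (k : ℕ) : Prop :=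
  (∑ i, m i = k) ∧
    ∀ j : ℕ, (∑ i, (Nat.digits p (m i)).getD j 0) = (Nat.digits p k).getD j 0

/-- `U_d(k)`. -/
def Uset (p q d k : ℕ) : Set (Fin (d + 1) → ℕ) :=
  {m | NoCarry p m k ∧ ∀ i : Fin (d + 1), 0 < (i : ℕ) → 0 < m i ∧ (q - 1) ∣ m i}

/-- `V_d(k)`. -/
def Vset (p q d k : ℕ) : Set (Fin (d + 1) → ℕ) :=
  {m | m ∈ Uset p q d k ∧ 0 < m 0}

/-- `W_d(k)`, the index set for the restricted power sum at `v = t`. -/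
def Wset (p q d k : ℕ) : Set (Fin (d + 1) → ℕ) :=
  {m | NoCarry p m k ∧
      (∀ i : Fin (d + 1), 0 < (i : ℕ) → (i : ℕ) < d → 0 < m i ∧ (q - 1) ∣ m i) ∧
      (q - 1) ∣ m (Fin.last d)}

/-- the weight `d·m_0 + (d-1)·m_1 + ⋯ + 1·m_{d-1}`. -/
def wt {d : ℕ} (m : Fin (d + 1) → ℕ) : ℕ := ∑ i : Fin (d + 1), (d - (i : ℕ)) * m i

/-- `L_k = min_{0 ≤ i ≤ f-1} l(k·p^i)/(q-1)` where `l` is the base-`q` digit sum. -/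
noncomputable def Lval (q p f k : ℕ) : ℚ :=
  (Finset.Icc 0 (f - 1)).inf' ⟨0, by simp⟩
    (fun i => ((Nat.digits q (k * p ^ i)).sum : ℚ) / ((q : ℚ) - 1))

/-- the `v`-adic multiple zeta value at negative integers `s_1, …, s_r`. -/
noncomputable def zetaV (F : Type) [Field F] [Fintype F] (v : F[X]) {r : ℕ}
    (s : Fin r → ℤ) : F[X] :=
  ∑ᶠ d ∈ {d : Fin r → ℕ | StrictAnti d}, ∏ i, rPowerSum F v (d i) (-(s i)).toNat

/-- the multiple zeta value at negative integers `s_1, …, s_r`. -/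
noncomputable def zetaMZV (F : Type) [Field F] [Fintype F] {r : ℕ} (s : Fin r → ℤ) : F[X] :=
  ∑ᶠ d ∈ {d : Fin r → ℕ | StrictAnti d}, ∏ i, powerSum F (d i) (-(s i)).toNat

/-- the trivial-zero condition for a prime of degree `e`. -/
def TrivialZeroCond (q p f : ℕ) {r : ℕ} (s : Fin r → ℤ) (e : ℕ) : Prop :=
  (∃ i : Fin r, s i < 0 ∧
      Lval q p f (-(s i)).toNat + (e : ℚ) < ((r - 1 - (i : ℕ) : ℕ) : ℚ)) ∨
  (∃ i j : Fin r, j < i ∧ s i < 0 ∧ s j < 0 ∧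
      (r - 1 - (i : ℕ) : ℕ) < e ∧
      Lval q p f (-(s i)).toNat < ((r - 1 - (i : ℕ) : ℕ) : ℚ) ∧
      Lval q p f (-(s j)).toNat < (((i : ℕ) - (j : ℕ) : ℕ) : ℚ))

/-! ### Content of an integer vector and pushing along the cycle -/

namespace Sheats

variable {f : ℕ} [NeZero f]

/-- The content `s ↦ p * Y s - Y (s - 1)` of an integer vector indexed by the residues modulo `f`.
If `x j` (`j < L`) are nonnegative weights on the powers `p ^ j` and all the rotations
`∑ x j * p ^ ((j - 1 - t) mod f)` are divisible by `p ^ f - 1`, with quotients `Y t`, then the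
content of `Y` at `s` is the sum of the `x j` over `j ≡ s`; see `rotSum_content`. -/
def content (p : ℕ) (Y : ZMod f → ℤ) (s : ZMod f) : ℤ := p * Y s - Y (s - 1)

theorem content_add (p : ℕ) (Y Z : ZMod f → ℤ) (s : ZMod f) :
    content p (Y + Z) s = content p Y s + content p Z s := by
  simp only [content, Pi.add_apply]; ring

theorem content_sub (p : ℕ) (Y Z : ZMod f → ℤ) (s : ZMod f) :
    content p (Y - Z) s = content p Y s - content p Z s := by
  simp only [content, Pi.sub_apply]; ring

/-- Induction along the cycle `ZMod f`, downwards from `s - 1` to `s`. -/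
theorem cyclic_down {P : ZMod f → Prop} (s : ZMod f) (h0 : P (s - 1))
    (hstep : ∀ r, r ≠ s → P r → P (r - 1)) : ∀ t, P t := by
  have key : ∀ i : ℕ, i < f → P (s - 1 - (i : ZMod f)) := by
    intro i
    induction i with
    | zero => intro _; simpa using h0
    | succ i ih =>
      intro hi
      have h1 := hstep _ ?_ (ih (by omega))
      · convert h1 using 1; push_cast; ring
      · intro h
        have h2 : ((i + 1 : ℕ) : ZMod f) = 0 := by
          push_cast; linear_combination -h
        rw [ZMod.natCast_eq_zero_iff] at h2
        exact absurd (Nat.le_of_dvd (by omega) h2) (by omega)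
  intro t
  have := key (s - 1 - t).val (ZMod.val_lt _)
  rwa [ZMod.natCast_zmod_val, sub_sub_cancel] at this

/-- The values of the push vector of `exists_push` along `s - 1, s - 2, …`: starting with `1`, each
value is `p` times the previous one minus the capacity `σ` met on the way, truncated at `0`. -/
def cascade (p : ℕ) (σ : ZMod f → ℤ) (s : ZMod f) : ℕ → ℤ
  | 0 => 1
  | i + 1 => max 0 (p * cascade p σ s i - σ (s - 1 - (i : ZMod f)))

/-- If `W ≥ 0` has content at most `σ` away from `s` and nonpositive content at `s`, and
`W (s - 1) ≥ 1`, then there is a vector `0 ≤ u ≤ W` which removes exactly one unit of content at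
`s` and adds between `0` and `σ r` units at every other `r`, using the whole capacity `σ r` before
anything is passed on to `r - 1`. -/
theorem exists_push {p : ℕ} (hp : 2 ≤ p) (σ W : ZMod f → ℤ) (s : ZMod f)
    (hσ : ∀ r, 0 ≤ σ r) (hW : ∀ r, 0 ≤ W r)
    (hWσ : ∀ r, r ≠ s → content p W r ≤ σ r) (hWs : content p W s ≤ 0)
    (hWs1 : 1 ≤ W (s - 1)) :
    ∃ u : ZMod f → ℤ, (∀ r, 0 ≤ u r) ∧ u (s - 1) = 1 ∧ u s = 0 ∧ (∀ r, u r ≤ W r) ∧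
      content p u s = -1 ∧
      ∀ r, r ≠ s → 0 ≤ content p u r ∧ content p u r ≤ σ r ∧
        (0 < u (r - 1) → content p u r = σ r) := by
  set u : ZMod f → ℤ := fun t => cascade p σ s (s - 1 - t).val with hu
  have hp' : (2 : ℤ) ≤ p := by exact_mod_cast hp
  have u1 : u (s - 1) = 1 := by simp [hu, cascade]
  have ustep : ∀ r, r ≠ s → u (r - 1) = max 0 (p * u r - σ r) := by
    intro r hr
    have hv : (s - 1 - (r - 1)).val = (s - 1 - r).val + 1 := by
      have e : s - 1 - (r - 1) = (s - 1 - r) + 1 := by ring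
      have hlt : (s - 1 - r).val + 1 < f := by
        have h1 := ZMod.val_lt (s - 1 - r)
        rcases Nat.lt_or_ge ((s - 1 - r).val + 1) f with h | h
        · exact h
        · exfalso
          have h2 : (s - 1 - r).val + 1 = f := by omega
          have h3 : (((s - 1 - r).val + 1 : ℕ) : ZMod f) = 0 := by rw [h2]; simp
          push_cast at h3
          rw [ZMod.natCast_zmod_val] at h3
          apply hr; linear_combination -h3
      have h4 : s - 1 - (r - 1) = (((s - 1 - r).val + 1 : ℕ) : ZMod f) := by
        push_cast; rw [ZMod.natCast_zmod_val, e]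
      rw [h4, ZMod.val_natCast, Nat.mod_eq_of_lt hlt]
    simp only [hu, hv, cascade]
    rw [ZMod.natCast_zmod_val, sub_sub_cancel]
  have u0 : ∀ r, 0 ≤ u r := by
    refine cyclic_down (P := fun r => 0 ≤ u r) s ?_ ?_
    · rw [u1]; norm_num
    · intro r hr _; rw [ustep r hr]; exact le_max_left _ _
  have uW : ∀ r, u r ≤ W r := by
    refine cyclic_down (P := fun r => u r ≤ W r) s ?_ ?_
    · rw [u1]; exact hWs1
    · intro r hr ih
      rw [ustep r hr]
      apply max_le (hW _)
      have := hWσ r hr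
      simp only [content] at this
      nlinarith
  have hgap : ∀ r, u r = 0 ∨ W (s - 1) - 1 ≤ W r - u r := by
    refine cyclic_down (P := fun r => u r = 0 ∨ W (s - 1) - 1 ≤ W r - u r) s ?_ ?_
    · right; rw [u1]
    · intro r hr ih
      rcases lt_or_ge 0 (p * u r - σ r) with h | h
      · right
        rw [ustep r hr, max_eq_right h.le]
        have h1 := hWσ r hr
        simp only [content] at h1
        rcases ih with ih | ih
        · rw [ih] at h; have := hσ r; exfalso; linarith
        · have := uW r
          nlinarith
      · left; rw [ustep r hr, max_eq_left h]
  have us : u s = 0 := by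
    rcases hgap s with h | h
    · exact h
    · have h1 := u0 s
      have h2 := uW s
      simp only [content] at hWs
      rcases (hW s).eq_or_lt with h3 | h3
      · omega
      · nlinarith
  refine ⟨u, u0, u1, us, uW, by simp [content, us, u1], fun r hr => ?_⟩
  have h1 := ustep r hr
  have h2 := u0 r
  have h3 := hσ r
  simp only [content]
  rcases le_total (p * u r - σ r) 0 with h | h
  · rw [max_eq_left h] at h1
    rw [h1]
    refine ⟨by nlinarith, by linarith, fun h => absurd h (lt_irrefl _)⟩
  · rw [max_eq_right h] at h1
    rw [h1]
    refine ⟨by linarith, by linarith, fun _ => by ring⟩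

/-- A push vector stays strictly below `K` wherever it is nonzero, provided this holds at `s - 1` and
the content of `K` exceeds the capacity by at most `p - 1`. -/
theorem push_lt {p : ℕ} (hp : 2 ≤ p) {σ u K : ZMod f → ℤ} {s : ZMod f}
    (u0 : ∀ r, 0 ≤ u r) (u1 : u (s - 1) = 1) (hσ : ∀ r, 0 ≤ σ r)
    (hu : ∀ r, r ≠ s → 0 < u (r - 1) → content p u r = σ r)
    (hK1 : 2 ≤ K (s - 1)) (hK : ∀ r, r ≠ s → content p K r ≤ σ r + (p - 1)) :
    ∀ r, u r = 0 ∨ u r < K r := by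
  have hp' : (2 : ℤ) ≤ p := by exact_mod_cast hp
  refine cyclic_down (P := fun r => u r = 0 ∨ u r < K r) s ?_ ?_
  · right; omega
  · intro r hr ih
    rcases (u0 (r - 1)).eq_or_lt with h | h
    · left; exact h.symm
    · right
      have h1 := hu r hr h
      have h2 := hK r hr
      simp only [content] at h1 h2
      rcases ih with ih | ih
      · rw [ih] at h1; have := hσ r; linarith
      · nlinarith

end Sheats

/-! ### Digit profiles, cheapest vectors in a window, and the exchange principle -/

namespace Sheats
variable {f : ℕ} [NeZero f]

/-- A supply of atoms for each residue class modulo `f`, listed in increasing order of position. The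
`i`-th atom of class `s` sits at position `pos s i ≡ s` and weighs `p ^ pos s i`; no position carries
more than `p - 1` atoms, which is `lt_pos`. Only the first `N s` atoms of class `s` are available;
the list is continued beyond them so that `pos` is total. -/
structure Profile (f : ℕ) where
  p : ℕ
  two_le : 2 ≤ p
  N : ZMod f → ℕ
  pos : ZMod f → ℕ → ℕ
  mono : ∀ s, Monotone (pos s)
  cast_pos : ∀ s i, ((pos s i : ℕ) : ZMod f) = s
  lt_pos : ∀ s i, pos s i < pos s (i + (p - 1))

namespace Profile
variable (C : Profile f)

/-- The number of atoms of class `s` used by the vector `Y`. -/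
abbrev n (Y : ZMod f → ℤ) (s : ZMod f) : ℤ := content C.p Y s

/-- `Y` uses a nonnegative and available number of atoms of every class. -/
def Box (Y : ZMod f → ℤ) : Prop := ∀ s, 0 ≤ C.n Y s ∧ C.n Y s ≤ C.N s

/-- The number of atoms at position `j` among the first `m` atoms of the class of `j`; a negative `m`
counts as `0`. -/
def cnt (j : ℕ) (m : ℤ) : ℤ :=
  (((Finset.range m.toNat).filter (fun i => C.pos (j : ZMod f) i = j)).card : ℤ)

/-- The weight of the first `m` atoms of class `s`; a negative `m` counts as `0`. -/
def part (s : ZMod f) (m : ℤ) : ℤ := ∑ i ∈ Finset.range m.toNat, (C.p : ℤ) ^ C.pos s i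

/-- The base-`p` digit at `j` of `cost Y`: the number of atoms at position `j` used by `Y`, the
cheapest atoms of each class being used first. -/
def dig (j : ℕ) (Y : ZMod f → ℤ) : ℤ := C.cnt j (C.n Y j)

/-- The least total weight of atoms with the class counts prescribed by `Y`. -/
noncomputable def cost (Y : ZMod f → ℤ) : ℤ := ∑ s, C.part s (C.n Y s)

/-- A strict upper bound for the positions of all available atoms. -/
noncomputable def top : ℕ := (Finset.univ.sup fun s => C.pos s (C.N s)) + 1

theorem pos_lt_top {s : ZMod f} {i : ℕ} (hi : i ≤ C.N s) : C.pos s i < C.top := by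
  have h1 : C.pos s (C.N s) ≤ Finset.univ.sup fun s => C.pos s (C.N s) :=
    Finset.le_sup (f := fun s => C.pos s (C.N s)) (Finset.mem_univ s)
  have h2 := C.mono s hi
  unfold top
  omega

theorem cnt_mono (j : ℕ) {m m' : ℤ} (h : m ≤ m') : C.cnt j m ≤ C.cnt j m' := by
  unfold cnt
  exact_mod_cast Finset.card_le_card (Finset.filter_subset_filter _
    (Finset.range_subset_range.2 (Int.toNat_le_toNat h)))

theorem cnt_nonneg (j : ℕ) (m : ℤ) : 0 ≤ C.cnt j m := by unfold cnt; positivity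

theorem cnt_succ (j : ℕ) {m : ℤ} (h : 0 ≤ m) :
    C.cnt j (m + 1) = C.cnt j m + if C.pos (j : ZMod f) m.toNat = j then 1 else 0 := by
  unfold cnt
  have : (m + 1).toNat = m.toNat + 1 := by omega
  rw [this, Finset.range_add_one, Finset.filter_insert]
  split_ifs with h
  · rw [Finset.card_insert_of_notMem (by simp)]; push_cast; ring
  · simp

theorem card_atoms_le (s : ZMod f) (j m : ℕ) :
    ((Finset.range m).filter (fun i => C.pos s i = j)).card ≤ C.p - 1 := by
  have h2 := C.two_le
  rcases ((Finset.range m).filter (fun i => C.pos s i = j)).eq_empty_or_nonempty with h | h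
  · rw [h]; simp
  · obtain ⟨a, ha, hmin⟩ := Finset.exists_min_image _ id h
    have : ((Finset.range m).filter (fun i => C.pos s i = j)) ⊆ Finset.Ico a (a + (C.p - 1)) := by
      intro i hi
      have h3 := hmin i hi
      simp only [id, Finset.mem_filter] at h3 ha hi
      rw [Finset.mem_Ico]
      refine ⟨h3, ?_⟩
      by_contra hc
      have h4 := C.mono s (not_lt.1 hc)
      have h5 := C.lt_pos s a
      omega
    have := Finset.card_le_card this
    simpa using this

theorem cnt_le (j : ℕ) (m : ℤ) : C.cnt j m ≤ C.p - 1 := by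
  have := C.card_atoms_le (j : ZMod f) j m.toNat
  have h2 := C.two_le
  unfold cnt
  omega

theorem cnt_lt {j : ℕ} {m m' : ℤ} {i : ℕ} (h : m ≤ i) (h' : (i : ℤ) < m')
    (hi : C.pos (j : ZMod f) i = j) : C.cnt j m < C.cnt j m' := by
  have h1 := C.cnt_mono j h
  have h2 := C.cnt_mono j (show (i : ℤ) + 1 ≤ m' by omega)
  rw [C.cnt_succ j (by omega)] at h2
  simp [hi] at h2
  omega

theorem exists_of_cnt_lt {j : ℕ} {m m' : ℤ} (hm : 0 ≤ m) (h : C.cnt j m < C.cnt j m') :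
    ∃ i : ℕ, m ≤ i ∧ (i : ℤ) < m' ∧ C.pos (j : ZMod f) i = j := by
  by_contra! hc
  apply absurd h
  rw [not_lt]
  unfold cnt
  apply Int.ofNat_le.2
  apply Finset.card_le_card
  intro i hi
  simp only [Finset.mem_filter, Finset.mem_range] at hi ⊢
  refine ⟨?_, hi.2⟩
  by_contra h3
  exact hc i (by omega) (by omega) hi.2

theorem cost_eq {Y : ZMod f → ℤ} (hY : C.Box Y) :
    C.cost Y = ∑ j ∈ Finset.range C.top, C.dig j Y * (C.p : ℤ) ^ j := by
  have h1 : ∀ s, C.part s (C.n Y s) = ∑ j ∈ Finset.range C.top,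
      ∑ i ∈ Finset.range (C.n Y s).toNat, if C.pos s i = j then (C.p : ℤ) ^ j else 0 := by
    intro s
    unfold part
    rw [Finset.sum_comm]
    apply Finset.sum_congr rfl
    intro i hi
    have h2 := (hY s).2
    have h3 : C.pos s i < C.top := C.pos_lt_top (by simp at hi; omega)
    rw [Finset.sum_ite_eq]
    simp [h3]
  unfold cost
  rw [Finset.sum_congr rfl (fun s _ => h1 s), Finset.sum_comm]
  apply Finset.sum_congr rfl
  intro j _
  rw [Finset.sum_eq_single (j : ZMod f)]
  · rw [← Finset.sum_filter, Finset.sum_const]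
    simp [dig, cnt]
  · intro s _ hs
    apply Finset.sum_eq_zero
    intro i _
    rw [if_neg]
    intro h
    apply hs
    rw [← C.cast_pos s i, h]
  · simp

theorem sum_lower {p : ℕ} (hp : 2 ≤ p) (v : ℕ → ℤ) (J : ℕ) (hv : ∀ j < J, -((p : ℤ) - 1) ≤ v j) :
    1 - (p : ℤ) ^ J ≤ ∑ j ∈ Finset.range J, v j * (p : ℤ) ^ j := by
  induction J with
  | zero => simp
  | succ J ih =>
    rw [Finset.sum_range_succ]
    have h1 := ih (fun j hj => hv j (by omega))
    have h2 := hv J (by omega)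
    have h3 : (0 : ℤ) < (p : ℤ) ^ J := by positivity
    rw [pow_succ]
    nlinarith

/-- A combination of powers of `p` with leading coefficient positive and all coefficients at least
`-(p - 1)` is positive. This is why a *lower* bound on digit differences suffices to compare sums. -/
theorem top_pos {p : ℕ} (hp : 2 ≤ p) (v : ℕ → ℤ) {J M : ℕ} (hJ : J < M)
    (hv : ∀ j < J, -((p : ℤ) - 1) ≤ v j) (hvJ : 1 ≤ v J) (h0 : ∀ j, J < j → v j = 0) :
    1 ≤ ∑ j ∈ Finset.range M, v j * (p : ℤ) ^ j := by
  have : ∑ j ∈ Finset.range M, v j * (p : ℤ) ^ j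
      = ∑ j ∈ Finset.range (J + 1), v j * (p : ℤ) ^ j := by
    symm
    apply Finset.sum_subset
    · intro j; simp; omega
    · intro j _ hj
      simp at hj
      rw [h0 j (by omega)]; simp
  rw [this, Finset.sum_range_succ]
  have h1 := sum_lower hp v J hv
  have h3 : (0 : ℤ) < (p : ℤ) ^ J := by positivity
  nlinarith

/-- A vector is determined by its content, since `p ≥ 2` makes the cyclic system nonsingular. -/
theorem eq_of_content_eq {Y Z : ZMod f → ℤ} (h : ∀ s, C.n Y s = C.n Z s) : Y = Z := by
  have hp : (2 : ℤ) ≤ C.p := by exact_mod_cast C.two_le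
  obtain ⟨s, -, hs⟩ := Finset.exists_max_image (Finset.univ : Finset (ZMod f))
    (fun s => |Y s - Z s|) ⟨0, Finset.mem_univ _⟩
  have h1 := h s
  have h2 := hs (s - 1) (Finset.mem_univ _)
  have h3 : Y (s - 1) - Z (s - 1) = C.p * (Y s - Z s) := by
    simp only [n, content] at h1; linarith
  rw [h3, abs_mul, Nat.abs_cast] at h2
  have h4 : |Y s - Z s| ≤ 0 := by nlinarith [abs_nonneg (Y s - Z s)]
  funext t
  have h5 := hs t (Finset.mem_univ _)
  have h6 : |Y t - Z t| = 0 := le_antisymm (h5.trans h4) (abs_nonneg _)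
  have := abs_eq_zero.1 h6
  omega

theorem exists_dig_ne {Y Z : ZMod f → ℤ} (hY : C.Box Y) (hZ : C.Box Z) (h : Y ≠ Z) :
    ∃ j, C.dig j Y ≠ C.dig j Z := by
  by_contra! hc
  apply h
  apply C.eq_of_content_eq
  intro s
  have key : ∀ Y Z : ZMod f → ℤ, C.Box Y → (∀ j, C.dig j Y = C.dig j Z) →
      ¬ C.n Y s < C.n Z s := by
    intro Y Z hY hc hlt
    have h0 := (hY s).1
    have h1 := hc (C.pos s (C.n Y s).toNat)
    have h2 : C.dig (C.pos s (C.n Y s).toNat) Y < C.dig (C.pos s (C.n Y s).toNat) Z := by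
      unfold dig
      rw [C.cast_pos]
      exact C.cnt_lt (i := (C.n Y s).toNat) (by omega) (by omega) (by rw [C.cast_pos])
    omega
  have := key Y Z hY hc
  have := key Z Y hZ (fun j => (hc j).symm)
  omega

theorem dig_eq_zero {Y : ZMod f → ℤ} (hY : C.Box Y) {j : ℕ} (hj : C.top ≤ j) :
    C.dig j Y = 0 := by
  unfold dig cnt
  rw [Int.natCast_eq_zero, Finset.card_eq_zero, Finset.filter_eq_empty_iff]
  intro i hi h
  have h1 := (hY (j : ZMod f)).2
  have := C.pos_lt_top (s := (j : ZMod f)) (i := i) (by simp at hi; omega)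
  omega

theorem cost_lt {Y Z : ZMod f → ℤ} (hY : C.Box Y) (hZ : C.Box Z) {J : ℕ}
    (hJ : C.dig J Y < C.dig J Z) (h : ∀ j, J < j → C.dig j Y = C.dig j Z) :
    C.cost Y < C.cost Z := by
  have hJt : J < C.top := by
    by_contra hc
    rw [C.dig_eq_zero hY (not_lt.1 hc), C.dig_eq_zero hZ (not_lt.1 hc)] at hJ
    omega
  have := top_pos C.two_le (fun j => C.dig j Z - C.dig j Y) hJt
    (fun j _ => by
      have h1 := C.cnt_le j (C.n Y j)
      have h2 := C.cnt_nonneg j (C.n Z j)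
      unfold dig
      linarith) (by omega) (fun j hj => by simp only [h j hj, sub_self])
  rw [C.cost_eq hY, C.cost_eq hZ, ← sub_pos, ← Finset.sum_sub_distrib]
  simp only [sub_mul] at this
  omega

theorem exists_last {P : ℕ → Prop} {M : ℕ} (h : ∃ j, P j) (hM : ∀ j, P j → j < M) :
    ∃ J, P J ∧ ∀ j, J < j → ¬ P j := by
  classical
  obtain ⟨j, hj⟩ := h
  refine ⟨Nat.findGreatest P M, Nat.findGreatest_spec (hM j hj).le hj, fun i hi hPi => ?_⟩
  exact absurd (Nat.le_findGreatest (hM i hPi).le hPi) (by omega)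

/-- Costs have base-`p` digits `dig j Y ≤ p - 1`, and these digits determine `Y`. -/
theorem cost_inj {Y Z : ZMod f → ℤ} (hY : C.Box Y) (hZ : C.Box Z) (h : C.cost Y = C.cost Z) :
    Y = Z := by
  by_contra hne
  obtain ⟨J, hJ, hJ'⟩ := exists_last (P := fun j => C.dig j Y ≠ C.dig j Z) (M := C.top)
    (C.exists_dig_ne hY hZ hne) (fun j hj => by
      by_contra hc
      exact hj (by rw [C.dig_eq_zero hY (not_lt.1 hc), C.dig_eq_zero hZ (not_lt.1 hc)]))
  simp only [not_not] at hJ'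
  rcases lt_or_gt_of_ne hJ with h1 | h1
  · have := C.cost_lt hY hZ h1 hJ'; omega
  · have := C.cost_lt hZ hY h1 (fun j hj => (hJ' j hj).symm); omega

/-- Convexity of `part` in the number of atoms: the atoms are listed by increasing weight. -/
theorem part_convex (s : ZMod f) {a b a' b' : ℤ} (ha : 0 ≤ a) (hab : a ≤ a') (hab' : a ≤ b')
    (h : a' + b' = a + b) : C.part s a' + C.part s b' ≤ C.part s a + C.part s b := by
  have key : ∀ (a b c : ℕ), a ≤ b →
      ∑ i ∈ Finset.range (a + c), (C.p : ℤ) ^ C.pos s i + ∑ i ∈ Finset.range b, (C.p : ℤ) ^ C.pos s i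
      ≤ ∑ i ∈ Finset.range a, (C.p : ℤ) ^ C.pos s i
        + ∑ i ∈ Finset.range (b + c), (C.p : ℤ) ^ C.pos s i := by
    intro a b c hab
    induction c with
    | zero => simp
    | succ c ih =>
      rw [← add_assoc, ← add_assoc, Finset.sum_range_succ, Finset.sum_range_succ]
      have h1 : (C.p : ℤ) ^ C.pos s (a + c) ≤ (C.p : ℤ) ^ C.pos s (b + c) :=
        pow_le_pow_right₀ (by have := C.two_le; exact_mod_cast (by omega : 1 ≤ C.p))
          (C.mono s (by omega))
      linarith
  have := key a.toNat b'.toNat (a' - a).toNat (by omega)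
  unfold part
  rwa [show a.toNat + (a' - a).toNat = a'.toNat by omega,
    show b'.toNat + (a' - a).toNat = b.toNat by omega] at this

/-- `P` is a cheapest box vector in the window `lo ≤ P < hi`. -/
def Best (lo hi P : ZMod f → ℤ) : Prop :=
  (C.Box P ∧ ∀ s, lo s ≤ P s ∧ P s < hi s) ∧
    ∀ Y, C.Box Y → (∀ s, lo s ≤ Y s ∧ Y s < hi s) → C.cost P ≤ C.cost Y

variable {C}

/-- Exchange principle: if two cheapest vectors `P`, `Q` are replaced by `Y`, `Z` with the same sum,
with contents lying between those of `P` and `Q`, and inside the respective windows, then by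
convexity the total cost does not grow, so `Y = P`. -/
theorem exchange {l₁ h₁ P l₂ h₂ Q : ZMod f → ℤ} (hP : C.Best l₁ h₁ P) (hQ : C.Best l₂ h₂ Q)
    (Y Z : ZMod f → ℤ) (hsum : ∀ s, Y s + Z s = P s + Q s)
    (hmid : ∀ s, (C.n P s ≤ C.n Y s ∧ C.n Y s ≤ C.n Q s) ∨
      (C.n Q s ≤ C.n Y s ∧ C.n Y s ≤ C.n P s))
    (hY : ∀ s, l₁ s ≤ Y s ∧ Y s < h₁ s) (hZ : ∀ s, l₂ s ≤ Z s ∧ Z s < h₂ s) : Y = P := by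
  have hn : ∀ s, C.n Y s + C.n Z s = C.n P s + C.n Q s := by
    intro s
    have h1 := hsum s
    have h2 := hsum (s - 1)
    simp only [n, content]
    linear_combination (C.p : ℤ) * h1 - h2
  have bP := hP.1.1
  have bQ := hQ.1.1
  have bY : C.Box Y := fun s => by
    have := bP s; have := bQ s; have := hmid s
    omega
  have bZ : C.Box Z := fun s => by
    have := bP s; have := bQ s; have := hmid s; have := hn s
    omega
  have h1 := hP.2 Y bY hY
  have h2 := hQ.2 Z bZ hZ
  have h3 : C.cost Y + C.cost Z ≤ C.cost P + C.cost Q := by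
    unfold cost
    rw [← Finset.sum_add_distrib, ← Finset.sum_add_distrib]
    apply Finset.sum_le_sum
    intro s _
    have h4 := hn s
    rcases hmid s with h | h
    · exact C.part_convex s (bP s).1 h.1 (by omega) h4
    · rw [add_comm (C.part s (C.n P s))]
      exact C.part_convex s (bQ s).1 h.1 (by omega) (by omega)
  exact C.cost_inj bY bP (by omega)

/-- Exchange with the pointwise minimum and maximum. -/
theorem uncross {l₁ h₁ P l₂ h₂ Q : ZMod f → ℤ} (hP : C.Best l₁ h₁ P) (hQ : C.Best l₂ h₂ Q)
    (hlo : ∀ s, l₁ s ≤ Q s) (hhi : ∀ s, P s < h₂ s) : ∀ s, P s ≤ Q s := by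
  have h2 : (2 : ℤ) ≤ C.p := by exact_mod_cast C.two_le
  have := exchange hP hQ (fun s => min (P s) (Q s)) (fun s => max (P s) (Q s))
    (fun s => min_add_max _ _)
    (fun s => by
      simp only [n, content]
      rcases le_total (P s) (Q s) with h | h <;>
      rcases le_total (P (s - 1)) (Q (s - 1)) with h' | h'
      · rw [min_eq_left h, min_eq_left h']; rcases le_total (C.p * P s - P (s - 1)) (C.p * Q s - Q (s - 1)) with h | h
        · left; exact ⟨le_rfl, h⟩
        · right; exact ⟨h, le_rfl⟩
      · rw [min_eq_left h, min_eq_right h']; left; constructor <;> nlinarith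
      · rw [min_eq_right h, min_eq_left h']; right; constructor <;> nlinarith
      · rw [min_eq_right h, min_eq_right h']; rcases le_total (C.p * P s - P (s - 1)) (C.p * Q s - Q (s - 1)) with h | h
        · left; exact ⟨h, le_rfl⟩
        · right; exact ⟨le_rfl, h⟩)
    (fun s => by
      have h3 := hP.1.2 s
      exact ⟨le_min h3.1 (hlo s), lt_of_le_of_lt (min_le_left _ _) h3.2⟩)
    (fun s => by
      have := hQ.1.2 s; have := hhi s
      exact ⟨le_max_of_le_right (by omega), max_lt (by omega) (by omega)⟩)
  intro s
  rw [← this]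
  exact min_le_right _ _

/-- Exchange with `P + u` and `Q - u`, where `u` is a push vector at `s`: if `P ≤ Q` but `P` uses more
atoms of class `s` than `Q`, this contradicts minimality as soon as both windows leave enough room,
measured by `K₁` and `K₂`. -/
theorem push_false {l₁ h₁ P l₂ h₂ Q : ZMod f → ℤ} (hP : C.Best l₁ h₁ P) (hQ : C.Best l₂ h₂ Q)
    (hPQ : ∀ s, P s ≤ Q s) {s : ZMod f} (hs : C.n Q s < C.n P s) (K₁ K₂ : ZMod f → ℤ)
    (hK₁ : 2 ≤ K₁ (s - 1)) (hK₂ : 2 ≤ K₂ (s - 1))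
    (hn₁ : ∀ r, C.n K₁ r ≤ max 0 (C.n Q r - C.n P r) + 1)
    (hn₂ : ∀ r, C.n K₂ r ≤ max 0 (C.n Q r - C.n P r) + 1)
    (hroom : ∀ r x, 0 ≤ x → x = 0 ∨ (x < K₁ r ∧ x < K₂ r) → P r + x < h₁ r ∧ l₂ r ≤ Q r - x) :
    False := by
  have h2 : (2 : ℤ) ≤ C.p := by exact_mod_cast C.two_le
  have hW : ∀ r, C.n (Q - P) r = C.n Q r - C.n P r := fun r => content_sub _ _ _ _
  obtain ⟨u, u0, u1, us, uW, ns, hu⟩ := exists_push C.two_le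
    (fun r => max 0 (C.n Q r - C.n P r)) (Q - P) s (fun r => le_max_left _ _)
    (fun r => by have := hPQ r; simp only [Pi.sub_apply]; omega)
    (fun r _ => by show C.n (Q - P) r ≤ _; rw [hW]; exact le_max_right _ _)
    (by show C.n (Q - P) s ≤ _; rw [hW]; omega)
    (by
      have h1 := hPQ s
      have h3 : C.n (Q - P) s < 0 := by rw [hW]; omega
      simp only [n, content, Pi.sub_apply] at h3 ⊢
      nlinarith)
  have r₁ := push_lt C.two_le u0 u1 (fun r => le_max_left _ _) (fun r hr => (hu r hr).2.2) hK₁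
    (fun r _ => (hn₁ r).trans (by linarith))
  have r₂ := push_lt C.two_le u0 u1 (fun r => le_max_left _ _) (fun r hr => (hu r hr).2.2) hK₂
    (fun r _ => (hn₂ r).trans (by linarith))
  have room : ∀ r, P r + u r < h₁ r ∧ l₂ r ≤ Q r - u r := fun r =>
    hroom r (u r) (u0 r) (by have := r₁ r; have := r₂ r; omega)
  have := exchange hP hQ (P + u) (Q - u) (fun r => by simp only [Pi.add_apply, Pi.sub_apply]; ring)
    (fun r => by
      have h3 : C.n (P + u) r = C.n P r + C.n u r := content_add _ _ _ _
      rw [h3]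
      by_cases hr : r = s
      · subst hr
        right
        change C.n u r = -1 at ns
        omega
      · have h4 := hu r hr
        change 0 ≤ C.n u r ∧ C.n u r ≤ _ ∧ _ at h4
        omega)
    (fun r => by
      have := hP.1.2 r; have := u0 r; have := room r
      simp only [Pi.add_apply]; omega)
    (fun r => by
      have := hQ.1.2 r; have := u0 r; have := room r
      simp only [Pi.sub_apply]; omega)
  have := congrFun this (s - 1)
  simp only [Pi.add_apply] at this
  omega

end Profile
end Sheats

/-! ### Comparing the greedy chain with a levelwise cheapest chain: counts per position -/

namespace Sheats
variable {f : ℕ} [NeZero f]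
namespace Profile
variable {C : Profile f}

/-- Two families of vectors below the common ceiling at index `d + 1`: the greedy family `G`, where
`G h` is cheapest among the box vectors with entries at least `h` and below `G (h + 1)`, and a
competitor `B`, where `B h` is cheapest with entries at least `lB h` and below `B (h + 1)`. The floor
`lB h` is the constant `h` for `h < d`, while `lB d` may be anything from `d` to `B (d - 1) + 1`. -/
structure Duel (C : Profile f) (d : ℕ) (G B lB : ℕ → ZMod f → ℤ) : Prop where
  hG : ∀ h, 1 ≤ h → h ≤ d → C.Best (fun _ => (h : ℤ)) (G (h + 1)) (G h)
  hB : ∀ h, 1 ≤ h → h ≤ d → C.Best (lB h) (B (h + 1)) (B h)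
  lB_eq : ∀ h, 1 ≤ h → h < d → lB h = fun _ => (h : ℤ)
  lB_ge : ∀ h, 1 ≤ h → h ≤ d → ∀ s, (h : ℤ) ≤ lB h s
  lB_le : ∀ h, h < d → ∀ s, lB (h + 1) s ≤ B h s + 1
  B0 : ∀ s, B 0 s = 0
  top : G (d + 1) = B (d + 1)

namespace Duel
variable {d : ℕ} {G B lB : ℕ → ZMod f → ℤ}

theorem G_le_B (D : C.Duel d G B lB) : ∀ h, 1 ≤ h → h ≤ d + 1 → ∀ s, G h s ≤ B h s := by
  have key : ∀ m h, h + m = d + 1 → 1 ≤ h → ∀ s, G h s ≤ B h s := by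
    intro m
    induction m with
    | zero => intro h hm _ s; rw [show h = d + 1 by omega, D.top]
    | succ m ih =>
      intro h hm h1
      have hG := D.hG h h1 (by omega)
      have hB := D.hB h h1 (by omega)
      refine uncross hG hB (fun s => ?_) (fun s => ?_)
      · exact (D.lB_ge h h1 (by omega) s).trans (hB.1.2 s).1
      · exact lt_of_lt_of_le (hG.1.2 s).2 (ih (h + 1) (by omega) (by omega) s)
  intro h h1 h2
  exact key (d + 1 - h) h (by omega) h1

theorem B_le_G (D : C.Duel d G B lB) : ∀ h, 1 ≤ h → h ≤ d → ∀ s, B h s ≤ G (h + 1) s := by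
  have key : ∀ m h, h + m = d → 1 ≤ h → ∀ s, B h s ≤ G (h + 1) s := by
    intro m
    induction m with
    | zero =>
      intro h hm h1 s
      obtain rfl : h = d := by omega
      rw [D.top]; exact ((D.hB h h1 le_rfl).1.2 s).2.le
    | succ m ih =>
      intro h hm h1
      have hG := D.hG (h + 1) (by omega) (by omega)
      have hB := D.hB h h1 (by omega)
      refine uncross hB hG (fun s => ?_) (fun s => ?_)
      · rw [D.lB_eq h h1 (by omega)]
        have := (hG.1.2 s).1
        push_cast at this
        simp only
        omega
      · exact lt_of_lt_of_le (hB.1.2 s).2 (ih (h + 1) (by omega) (by omega) s)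
  intro h h1 h2
  exact key (d - h) h (by omega) h1

theorem n_mono_succ (D : C.Duel d G B lB) {h : ℕ} (h1 : 1 ≤ h) (hd : h < d) (s : ZMod f) :
    C.n (G h) s ≤ C.n (G (h + 1)) s := by
  have h2 : (2 : ℤ) ≤ C.p := by exact_mod_cast C.two_le
  by_contra! hlt
  have hP := D.hG h h1 hd.le
  have hQ := D.hG (h + 1) (by omega) hd
  have hK : ∀ r, C.n (G (h + 1) - G h) r = C.n (G (h + 1)) r - C.n (G h) r :=
    fun r => content_sub _ _ _ _
  have hK2 : 2 ≤ (G (h + 1) - G h) (s - 1) := by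
    have h3 := hK s
    have h4 := (hP.1.2 s).2
    simp only [n, content, Pi.sub_apply] at h3 hlt ⊢
    nlinarith
  refine push_false hP hQ (fun r => (hP.1.2 r).2.le) hlt (G (h + 1) - G h) (G (h + 1) - G h)
    hK2 hK2 (fun r => by rw [hK]; omega) (fun r => by rw [hK]; omega) (fun r x x0 hx => ?_)
  have h3 : (h : ℤ) ≤ G h r ∧ _ := hP.1.2 r
  simp only [Pi.sub_apply] at hx
  push_cast
  omega

theorem n_mono (D : C.Duel d G B lB) {h h' : ℕ} (h1 : 1 ≤ h) (hh : h ≤ h') (hd : h' ≤ d)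
    (s : ZMod f) : C.n (G h) s ≤ C.n (G h') s := by
  induction h', hh using Nat.le_induction with
  | base => exact le_rfl
  | succ m hm ih => exact (ih (by omega)).trans (D.n_mono_succ (by omega) (by omega) s)

/-- In each class the competitor uses at most one atom less than the greedy family. -/
theorem drop_le_one (D : C.Duel d G B lB) {h : ℕ} (h1 : 1 ≤ h) (hd : h ≤ d) (s : ZMod f) :
    C.n (G h) s - 1 ≤ C.n (B h) s := by
  have h2 : (2 : ℤ) ≤ C.p := by exact_mod_cast C.two_le
  by_contra! hlt
  have hP := D.hG h h1 hd
  have hQ := D.hB h h1 hd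
  have hle := D.G_le_B h h1 (by omega)
  have hBG := D.B_le_G h h1 hd
  have hK : ∀ r, C.n (B h - G h) r = C.n (B h) r - C.n (G h) r :=
    fun r => content_sub _ _ _ _
  have hK2 : 2 ≤ (B h - G h) (s - 1) := by
    have h3 := hK s
    have h4 := hle s
    simp only [n, content, Pi.sub_apply] at h3 hlt ⊢
    nlinarith
  have hl : ∀ r, lB h r ≤ G h r + 1 := by
    intro r
    have h3 : (h : ℤ) ≤ G h r := (hP.1.2 r).1
    rcases hd.lt_or_eq with h4 | h4
    · rw [D.lB_eq h h1 h4]; simp only; omega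
    · obtain ⟨m, rfl⟩ := Nat.exists_eq_add_of_le' h1
      have h5 := D.lB_le m (by omega) r
      rcases Nat.eq_zero_or_pos m with rfl | hm
      · have := D.B0 r
        simp only [zero_add] at *
        push_cast at h3
        omega
      · have := D.B_le_G m hm (by omega) r
        omega
  refine push_false hP hQ hle (by omega) (B h - G h) (B h - G h)
    hK2 hK2 (fun r => by rw [hK]; omega) (fun r => by rw [hK]; omega) (fun r x x0 hx => ?_)
  have h3 := hP.1.2 r
  have h4 := hQ.1.2 r
  have h5 := hl r
  have h6 := hBG r
  simp only [Pi.sub_apply] at hx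
  omega

/-- If the greedy family uses equally many atoms of class `s` at levels `h` and `h + 1`, then the
competitor does not use fewer at level `h + 1`. -/
theorem no_double_drop (D : C.Duel d G B lB) {h : ℕ} (h1 : 1 ≤ h) (hd : h < d) {s : ZMod f}
    (hs : C.n (G h) s = C.n (G (h + 1)) s) : C.n (G (h + 1)) s ≤ C.n (B (h + 1)) s := by
  have h2 : (2 : ℤ) ≤ C.p := by exact_mod_cast C.two_le
  by_contra! hlt
  have hP := D.hG h h1 hd.le
  have hQ := D.hB (h + 1) (by omega) hd
  have hB := D.hB h h1 hd.le
  have hle := D.G_le_B (h + 1) (by omega) (by omega)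
  have hK : ∀ r, C.n (G (h + 1) - G h) r = C.n (G (h + 1)) r - C.n (G h) r :=
    fun r => content_sub _ _ _ _
  have hK' : ∀ r, C.n (B (h + 1) - B h) r = C.n (B (h + 1)) r - C.n (B h) r :=
    fun r => content_sub _ _ _ _
  have big : ∀ K : ZMod f → ℤ, C.n K s ≤ 0 → 1 ≤ K s → 2 ≤ K (s - 1) := by
    intro K hn hK
    simp only [n, content] at hn
    nlinarith
  refine push_false hP hQ (fun r => (hP.1.2 r).2.le.trans (hle r)) (by omega)
    (G (h + 1) - G h) (B (h + 1) - B h) (big _ ?_ ?_) (big _ ?_ ?_) (fun r => ?_) (fun r => ?_)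
    (fun r x x0 hx => ?_)
  · rw [hK]; omega
  · have := (hP.1.2 s).2; simp only [Pi.sub_apply]; omega
  · have := D.drop_le_one h1 hd.le s
    rw [hK']; omega
  · have := (hB.1.2 s).2; simp only [Pi.sub_apply]; omega
  · have := D.drop_le_one (h := h + 1) (by omega) hd r
    rw [hK]; omega
  · have := D.drop_le_one h1 hd.le r
    rw [hK']; omega
  · have h3 := hP.1.2 r
    have h4 := hQ.1.2 r
    have h5 := D.lB_le h hd r
    have h6 := hB.1.2 r
    simp only [Pi.sub_apply] at hx
    omega

/-- At each position the competitor uses, over all levels together, at most `p - 1` atoms less than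
the greedy family: different levels with a deficit lose different atoms at that position. -/
theorem lower_bound (D : C.Duel d G B lB) (j : ℕ) :
    -((C.p : ℤ) - 1) ≤ ∑ h ∈ Finset.Icc 1 d, (C.dig j (B h) - C.dig j (G h)) := by
  classical
  set E := (Finset.Icc 1 d).filter (fun h => C.dig j (B h) < C.dig j (G h)) with hE
  have mem : ∀ h ∈ E, 1 ≤ h ∧ h ≤ d ∧ C.dig j (B h) < C.dig j (G h) := by
    intro h hh
    simp only [hE, Finset.mem_filter, Finset.mem_Icc] at hh
    tauto
  have drop : ∀ h ∈ E, C.n (B h) j + 1 = C.n (G h) j ∧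
      C.pos (j : ZMod f) (C.n (B h) j).toNat = j ∧ 0 ≤ C.n (B h) j := by
    intro h hh
    obtain ⟨h1, hd, hlt⟩ := mem h hh
    have h0 := ((D.hB h h1 hd).1.1 (j : ZMod f)).1
    obtain ⟨i, hi1, hi2, hi3⟩ := C.exists_of_cnt_lt h0 hlt
    have h3 := D.drop_le_one h1 hd (j : ZMod f)
    refine ⟨by omega, ?_, h0⟩
    rw [show (C.n (B h) j).toNat = i by omega, hi3]
  have hcard : E.card ≤ C.p - 1 := by
    by_contra! hc
    obtain ⟨h, hh, h', hh', hne, heq⟩ := Finset.exists_ne_map_eq_of_card_lt_of_maps_to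
      (lt_of_le_of_lt (C.card_atoms_le (j : ZMod f) j (C.N j)) hc)
      (f := fun h => (C.n (B h) j).toNat) (fun h hh => by
        obtain ⟨h1, hd, -⟩ := mem h hh
        obtain ⟨e1, e2, e3⟩ := drop h hh
        have := ((D.hG h h1 hd).1.1 (j : ZMod f)).2
        rw [Finset.mem_coe, Finset.mem_filter, Finset.mem_range]
        exact ⟨by beta_reduce; omega, e2⟩)
    have key : ∀ h ∈ E, ∀ h' ∈ E, h < h' → (C.n (B h) j).toNat ≠ (C.n (B h') j).toNat := by
      intro h hh h' hh' hlt heq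
      obtain ⟨h1, hd, -⟩ := mem h hh
      obtain ⟨h1', hd', -⟩ := mem h' hh'
      have e := drop h hh
      have e' := drop h' hh'
      obtain ⟨m, rfl⟩ := Nat.exists_eq_add_of_lt hlt
      have m1 := D.n_mono (h := h) (h' := h + m) h1 (by omega) (by omega) (j : ZMod f)
      have m2 := D.n_mono_succ (h := h + m) (by omega) (by omega) (j : ZMod f)
      have := D.no_double_drop (h := h + m) (by omega) (by omega) (s := (j : ZMod f)) (by omega)
      omega
    rcases lt_or_gt_of_ne hne with hl | hl
    · exact key h hh h' hh' hl heq
    · exact key h' hh' h hh hl heq.symm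
  have hsum : ∑ h ∈ Finset.Icc 1 d, (if C.dig j (B h) < C.dig j (G h) then (-1 : ℤ) else 0) ≤
      ∑ h ∈ Finset.Icc 1 d, (C.dig j (B h) - C.dig j (G h)) := by
    apply Finset.sum_le_sum
    intro h hh
    split_ifs with hlt
    · have hm : h ∈ E := by simp only [hE, Finset.mem_filter]; exact ⟨hh, hlt⟩
      obtain ⟨e1, e2, e3⟩ := drop h hm
      have := C.cnt_succ j e3
      rw [e1, if_pos e2] at this
      unfold dig
      omega
    · omega
  rw [← Finset.sum_filter, ← hE, Finset.sum_const, nsmul_eq_mul] at hsum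
  have := C.two_le
  have : (E.card : ℤ) ≤ C.p - 1 := by omega
  linarith

end Duel
end Profile
end Sheats

/-! ### The greedy chain is strictly cheaper -/

namespace Sheats
variable {f : ℕ} [NeZero f]
namespace Profile

/-- The number of available atoms of class `r` at positions at most `J`. -/
def low (C : Profile f) (J : ℕ) (r : ZMod f) : ℕ :=
  ((Finset.range (C.N r)).filter (fun i => C.pos r i ≤ J)).card

variable {C : Profile f}

theorem low_le (J : ℕ) (r : ZMod f) : C.low J r ≤ C.N r := by
  have := Finset.card_filter_le (Finset.range (C.N r)) (fun i => C.pos r i ≤ J)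
  simpa [low] using this

theorem pos_le_of_lt_low {J : ℕ} {r : ZMod f} {i : ℕ} (h : i < C.low J r) : C.pos r i ≤ J := by
  by_contra! hc
  have : (Finset.range (C.N r)).filter (fun i => C.pos r i ≤ J) ⊆ Finset.range i := by
    intro i' hi'
    simp only [Finset.mem_filter, Finset.mem_range] at hi' ⊢
    by_contra! h2
    have := C.mono r h2
    omega
  have := Finset.card_le_card this
  rw [Finset.card_range] at this
  unfold low at h
  omega

theorem lt_pos_of_low_le {J : ℕ} {r : ZMod f} {i : ℕ} (h : C.low J r ≤ i) (hi : i < C.N r) :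
    J < C.pos r i := by
  by_contra! hc
  have : Finset.range (i + 1) ⊆ (Finset.range (C.N r)).filter (fun i => C.pos r i ≤ J) := by
    intro i' hi'
    simp only [Finset.mem_filter, Finset.mem_range] at hi' ⊢
    have := C.mono r (show i' ≤ i by omega)
    omega
  have := Finset.card_le_card this
  rw [Finset.card_range] at this
  unfold low at h
  omega

/-- If `Y` and `Z` use the same atoms beyond position `J`, then whatever `Z` uses in excess of `Y` lies
at positions at most `J`. -/
theorem n_le_max_low {J : ℕ} {Y Z : ZMod f → ℤ} (hY : C.Box Y) (hZ : C.Box Z)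
    (h : ∀ j, J < j → C.dig j Z = C.dig j Y) (r : ZMod f) :
    C.n Z r ≤ max (C.n Y r) (C.low J r) := by
  by_contra! hc
  have h1 := max_lt_iff.1 hc
  have h2 := hZ r
  have h3 := hY r
  set i := (C.n Z r - 1).toNat with hi
  have h4 : J < C.pos r i := lt_pos_of_low_le (by omega) (by omega)
  have h5 := h _ h4
  have h6 : C.dig (C.pos r i) Y < C.dig (C.pos r i) Z := by
    unfold dig
    rw [C.cast_pos]
    exact C.cnt_lt (i := i) (by omega) (by omega) (by rw [C.cast_pos])
  omega

/-- Giving up one atom at a position at least `J` in exchange for unused atoms of other classes, all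
at positions at most `J`, lowers the cost. -/
theorem cost_lt_of_trade {J : ℕ} {P u : ZMod f → ℤ} (hP : C.Box P) {r : ZMod f}
    (hr : 1 ≤ C.n P r) (hpos : J ≤ C.pos r (C.n P r - 1).toNat) (hur : C.n u r = -1)
    (hu : ∀ r', r' ≠ r → 0 ≤ C.n u r' ∧ C.n u r' ≤ max 0 (C.low J r' - C.n P r')) :
    C.Box (P + u) ∧ C.cost (P + u) < C.cost P := by
  have hn : ∀ s, C.n (P + u) s = C.n P s + C.n u s := fun s => content_add _ _ _ _
  have hbox : C.Box (P + u) := by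
    intro s
    have h1 := hP s
    have h2 := low_le (C := C) J s
    rw [hn]
    by_cases hs : s = r
    · subst hs; omega
    · have := hu s hs; omega
  refine ⟨hbox, ?_⟩
  set i := (C.n P r - 1).toNat with hi
  refine C.cost_lt hbox hP (J := C.pos r i) ?_ ?_
  · unfold dig
    rw [C.cast_pos, hn, hur]
    exact C.cnt_lt (i := i) (by omega) (by omega) (by rw [C.cast_pos])
  · intro j hj
    unfold dig
    rw [hn]
    by_cases hs : (j : ZMod f) = r
    · rw [hs, hur]
      apply le_antisymm
      · exact C.cnt_mono j (by omega)
      · by_contra! hc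
        obtain ⟨i', h1, h2, h3⟩ := C.exists_of_cnt_lt (by omega) hc
        rw [hs, show i' = i by omega] at h3
        omega
    · have h4 := hu j hs
      apply le_antisymm
      · by_contra! hc
        obtain ⟨i', h1, h2, h3⟩ := C.exists_of_cnt_lt (hP j).1 hc
        have := pos_le_of_lt_low (C := C) (J := J) (r := (j : ZMod f)) (i := i') (by omega)
        omega
      · exact C.cnt_mono j (by omega)

namespace Duel
variable {d : ℕ} {G B lB : ℕ → ZMod f → ℤ}

/-- Let `J` be such that `B` and `G` agree beyond position `J`. Then it cannot happen, at any level `h`,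
that `B h` exceeds `G h` at `r - 1`, uses no more atoms of class `r` than `G h`, and the last atom of
class `r` used by `G h` sits at a position at least `J`. Otherwise a push vector trades that atom for
atoms at positions at most `J`. Since `G h` is cheapest, the trade must hit the ceiling `G (h + 1)`,
and where it does the same situation arises at level `h + 1`. At level `d` the ceilings of `G` and
`B` coincide, so the trade fits. -/
theorem no_state (D : C.Duel d G B lB) {J : ℕ}
    (hJ : ∀ h, 1 ≤ h → h ≤ d → ∀ j, J < j → C.dig j (B h) = C.dig j (G h)) :
    ∀ m h, h + m = d → 1 ≤ h → ∀ r, 1 ≤ B h (r - 1) - G h (r - 1) → C.n (B h) r ≤ C.n (G h) r →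
      1 ≤ C.n (G h) r → J ≤ C.pos r (C.n (G h) r - 1).toNat → False := by
  have h2 : (2 : ℤ) ≤ C.p := by exact_mod_cast C.two_le
  intro m
  induction m with
  | zero => ?_
  | succ m ih => ?_
  all_goals
    intro h hm h1 r hr hle hpos1 hpos
    have hG := D.hG h h1 (by omega)
    have hB := D.hB h h1 (by omega)
    have hGB := D.G_le_B h h1 (by omega)
    have hBG := D.B_le_G h h1 (by omega)
    have hW : ∀ r, C.n (B h - G h) r = C.n (B h) r - C.n (G h) r := fun r => content_sub _ _ _ _
    obtain ⟨u, u0, u1, us, uW, ns, hu⟩ := exists_push C.two_le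
      (fun r => max 0 (C.low J r - C.n (G h) r)) (B h - G h) r (fun r => le_max_left _ _)
      (fun s => by have := hGB s; simp only [Pi.sub_apply]; omega)
      (fun s _ => by
        have := n_le_max_low hG.1.1 hB.1.1 (hJ h h1 (by omega)) s
        show C.n (B h - G h) s ≤ _
        rw [hW]; omega)
      (by show C.n (B h - G h) r ≤ _; rw [hW]; omega) (by simpa using hr)
    obtain ⟨hbox, hcost⟩ := cost_lt_of_trade hG.1.1 hpos1 hpos ns
      (fun s hs => ⟨(hu s hs).1, (hu s hs).2.1⟩)
    have hstuck : ¬ ∀ s, u s < G (h + 1) s - G h s := by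
      intro hlt
      have := hG.2 _ hbox (fun s => by
        have h3 : (h : ℤ) ≤ G h s := (hG.1.2 s).1
        have := hlt s; have := u0 s
        simp only [Pi.add_apply]; omega)
      omega
    simp only [Pi.sub_apply] at uW
    apply hstuck
  · obtain rfl : h = d := by omega
    intro s
    have := (hB.1.2 s).2
    rw [← D.top] at this
    have := uW s
    omega
  · have hG' := D.hG (h + 1) (by omega) (by omega)
    have hB' := D.hB (h + 1) (by omega) (by omega)
    have next : ∀ r', G (h + 1) (r' - 1) - G h (r' - 1) ≤ u (r' - 1) → 1 ≤ C.n (G (h + 1)) r' →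
        J < C.pos r' (C.n (G (h + 1)) r' - 1).toNat → False := by
      intro r' hK hn hp'
      refine ih (h + 1) (by omega) (by omega) r' ?_ ?_ hn hp'.le
      · have := (hB.1.2 (r' - 1)).2
        have := uW (r' - 1)
        omega
      · have h3 := n_le_max_low hG'.1.1 hB'.1.1 (hJ (h + 1) (by omega) (by omega)) r'
        by_contra! hc
        have := pos_le_of_lt_low (C := C) (J := J) (r := r')
          (i := (C.n (G (h + 1)) r' - 1).toNat) (by omega)
        omega
    have hKn : ∀ s, C.n (G (h + 1)) s = C.n (G h) s +
        (C.p * (G (h + 1) s - G h s) - (G (h + 1) (s - 1) - G h (s - 1))) := by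
      intro s; simp only [n, content]; ring
    refine cyclic_down (P := fun s => u s < G (h + 1) s - G h s) r ?_ ?_
    · by_contra! hc
      have h3 := hKn r
      have h4 := (hG.1.2 r).2
      have h5 : C.n (G h) r + (C.p - 1) ≤ C.n (G (h + 1)) r := by nlinarith
      refine next r hc (by omega) ?_
      refine lt_of_le_of_lt hpos (lt_of_lt_of_le (C.lt_pos r _) (C.mono r ?_))
      omega
    · intro r' hr' hlt
      by_contra! hc
      have h3 := hKn r'
      have h4 := (hG.1.2 (r' - 1)).2
      have h5 := (hu r' hr').2.2 (by omega)
      change C.p * u r' - u (r' - 1) = _ at h5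
      have h6 : max 0 (C.low J r' - C.n (G h) r') + C.p ≤ C.n (G (h + 1)) r' - C.n (G h) r' := by
        nlinarith
      have h7 := hG'.1.1 r'
      have h8 := hG.1.1 r'
      refine next r' hc (by omega) (lt_pos_of_low_le (by omega) (by omega))

/-- At the highest position where the families differ the competitor uses more atoms, by `no_state`;
below it the deficit is bounded by `lower_bound`, so `top_pos` applies. -/
theorem sum_cost_lt (D : C.Duel d G B lB) (hne : ∃ h, 1 ≤ h ∧ h ≤ d ∧ B h ≠ G h) :
    ∑ h ∈ Finset.Icc 1 d, C.cost (G h) < ∑ h ∈ Finset.Icc 1 d, C.cost (B h) := by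
  have h2 : (2 : ℤ) ≤ C.p := by exact_mod_cast C.two_le
  obtain ⟨J, ⟨h₀, h1₀, hd₀, hJ₀⟩, hJ⟩ := exists_last
    (P := fun j => ∃ h, 1 ≤ h ∧ h ≤ d ∧ C.dig j (B h) ≠ C.dig j (G h)) (M := C.top)
    (by
      obtain ⟨h, h1, hd, hne⟩ := hne
      obtain ⟨j, hj⟩ := C.exists_dig_ne (D.hB h h1 hd).1.1 (D.hG h h1 hd).1.1 hne
      exact ⟨j, h, h1, hd, hj⟩)
    (fun j ⟨h, h1, hd, hj⟩ => by
      by_contra! hc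
      exact hj (by rw [C.dig_eq_zero (D.hB h h1 hd).1.1 hc, C.dig_eq_zero (D.hG h h1 hd).1.1 hc]))
  have hJ' : ∀ h, 1 ≤ h → h ≤ d → ∀ j, J < j → C.dig j (B h) = C.dig j (G h) := by
    intro h h1 hd j hj
    by_contra hc
    exact hJ j hj ⟨h, h1, hd, hc⟩
  have hup : ∀ h, 1 ≤ h → h ≤ d → C.dig J (G h) ≤ C.dig J (B h) := by
    intro h h1 hd
    by_contra! hc
    obtain ⟨i, hi1, hi2, hi3⟩ := C.exists_of_cnt_lt ((D.hB h h1 hd).1.1 _).1 hc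
    have h3 := ((D.hB h h1 hd).1.1 (J : ZMod f)).1
    refine D.no_state hJ' (d - h) h (by omega) h1 (J : ZMod f) ?_ (by omega) (by omega) ?_
    · have h4 := D.G_le_B h h1 (by omega) (J : ZMod f)
      have h5 : C.n (B h) J < C.n (G h) J := by omega
      simp only [n, content] at h5
      nlinarith
    · have := C.mono (J : ZMod f) (show i ≤ (C.n (G h) J - 1).toNat by omega)
      omega
  have hJt : J < C.top := by
    by_contra! hc
    exact hJ₀ (by rw [C.dig_eq_zero (D.hB h₀ h1₀ hd₀).1.1 hc,
      C.dig_eq_zero (D.hG h₀ h1₀ hd₀).1.1 hc])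
  have key := top_pos C.two_le
    (fun j => ∑ h ∈ Finset.Icc 1 d, (C.dig j (B h) - C.dig j (G h))) hJt
    (fun j _ => D.lower_bound j)
    (by
      have : 0 < ∑ h ∈ Finset.Icc 1 d, (C.dig J (B h) - C.dig J (G h)) := by
        apply Finset.sum_pos'
        · intro h hh
          rw [Finset.mem_Icc] at hh
          have := hup h hh.1 hh.2
          omega
        · refine ⟨h₀, Finset.mem_Icc.2 ⟨h1₀, hd₀⟩, ?_⟩
          have := hup h₀ h1₀ hd₀
          omega
      omega)
    (fun j hj => Finset.sum_eq_zero (fun h hh => by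
      rw [Finset.mem_Icc] at hh
      rw [hJ' h hh.1 hh.2 j hj, sub_self]))
  have e : ∀ X : ℕ → ZMod f → ℤ, (∀ h, 1 ≤ h → h ≤ d → C.Box (X h)) →
      ∑ h ∈ Finset.Icc 1 d, C.cost (X h) =
      ∑ j ∈ Finset.range C.top, (∑ h ∈ Finset.Icc 1 d, C.dig j (X h)) * (C.p : ℤ) ^ j := by
    intro X hX
    simp only [Finset.sum_mul]
    rw [Finset.sum_comm]
    apply Finset.sum_congr rfl
    intro h hh
    rw [Finset.mem_Icc] at hh
    exact C.cost_eq (hX h hh.1 hh.2)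
  rw [e G (fun h h1 hd => (D.hG h h1 hd).1.1), e B (fun h h1 hd => (D.hB h h1 hd).1.1), ← sub_pos,
    ← Finset.sum_sub_distrib]
  simp only [Finset.sum_sub_distrib, sub_mul] at key ⊢
  omega

end Duel
end Profile
end Sheats

/-! ### Existence, optimality and uniqueness of the greedy chain -/

namespace Sheats
variable {f : ℕ} [NeZero f]
namespace Profile
variable {C : Profile f}

theorem cost_nonneg (Y : ZMod f → ℤ) : 0 ≤ C.cost Y :=
  Finset.sum_nonneg fun s _ => Finset.sum_nonneg fun i _ => by positivity

/-- A box vector in the window `[h, b]`, obtained as the greatest fixed point of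
`Y ↦ max h (p * Y (t + 1) - N (t + 1))`. -/
theorem exists_box_between {h : ℤ} (h0 : 0 ≤ h) {b : ZMod f → ℤ} (hb : ∀ s, h ≤ b s)
    (hbN : ∀ s, C.p * b s - C.N s ≤ b (s - 1)) :
    ∃ Y, C.Box Y ∧ ∀ s, h ≤ Y s ∧ Y s ≤ b s := by
  classical
  have h2 : (2 : ℤ) ≤ C.p := by exact_mod_cast C.two_le
  set Φ : (ZMod f → ℤ) → ZMod f → ℤ :=
    fun Y t => max h (C.p * Y (t + 1) - C.N (t + 1)) with hΦ
  set S := (Fintype.piFinset fun t => Finset.Icc h (b t)).filter (fun Y => ∀ t, Y t ≤ Φ Y t) with hS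
  have memS : ∀ Y, Y ∈ S ↔ (∀ t, h ≤ Y t ∧ Y t ≤ b t) ∧ ∀ t, Y t ≤ Φ Y t := by
    intro Y; simp [hS]
  obtain ⟨Y, hY, hmax⟩ := Finset.exists_max_image S (fun Y => ∑ t, Y t)
    ⟨fun _ => h, (memS _).2 ⟨fun t => ⟨le_rfl, hb t⟩, fun t => le_max_left _ _⟩⟩
  rw [memS] at hY
  have hΦmem : Φ Y ∈ S := by
    rw [memS]
    refine ⟨fun t => ⟨le_max_left _ _, max_le (hb t) ?_⟩, fun t => ?_⟩
    · have h3 := hbN (t + 1)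
      rw [add_sub_cancel_right] at h3
      have h4 := (hY.1 (t + 1)).2
      nlinarith
    · apply max_le_max le_rfl
      have h4 := hY.2 (t + 1)
      nlinarith
  have heq : ∀ t, Y t = Φ Y t := by
    have h3 := hmax _ hΦmem
    have h4 : ∑ t, Y t = ∑ t, Φ Y t := le_antisymm (Finset.sum_le_sum fun t _ => hY.2 t) h3
    intro t
    exact (Finset.sum_eq_sum_iff_of_le fun t _ => hY.2 t).1 h4 t (Finset.mem_univ t)
  refine ⟨Y, fun s => ?_, hY.1⟩
  have h3 := heq (s - 1)
  simp only [hΦ, sub_add_cancel] at h3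
  have h4 := (hY.1 s).1
  simp only [n, content]
  rw [h3]
  have h5 := le_max_left h (C.p * Y s - C.N s)
  have h6 := le_max_right h (C.p * Y s - C.N s)
  refine ⟨?_, by linarith⟩
  rw [sub_nonneg]
  exact max_le (by nlinarith) (by have : (0 : ℤ) ≤ C.N s := by positivity
                                  linarith)

theorem exists_best {lo hi : ZMod f → ℤ} (h : ∃ Y, C.Box Y ∧ ∀ s, lo s ≤ Y s ∧ Y s < hi s) :
    ∃ P, C.Best lo hi P := by
  obtain ⟨P, hP, hmin⟩ := (measure fun Y => (C.cost Y).toNat).wf.has_min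
    {Y | C.Box Y ∧ ∀ s, lo s ≤ Y s ∧ Y s < hi s} h
  refine ⟨P, hP, fun Y hY hY' => ?_⟩
  have h1 := hmin Y ⟨hY, hY'⟩
  have h2 := C.cost_nonneg Y
  have h3 := C.cost_nonneg P
  change ¬ ((C.cost Y).toNat < (C.cost P).toNat) at h1
  omega

/-- The greedy family below the ceiling `U`, built from level `d` downwards: `G h` is cheapest among
the box vectors with entries at least `h` and below `G (h + 1)`. -/
structure Greedy (C : Profile f) (d : ℕ) (U : ZMod f → ℤ) (G : ℕ → ZMod f → ℤ) : Prop where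
  zero : ∀ s, G 0 s = 0
  top : G (d + 1) = U
  best : ∀ h, 1 ≤ h → h ≤ d → C.Best (fun _ => (h : ℤ)) (G (h + 1)) (G h)

/-- A strictly increasing family of box vectors starting at `0`, below the ceiling `U`. -/
structure Strict (C : Profile f) (d : ℕ) (U : ZMod f → ℤ) (B : ℕ → ZMod f → ℤ) : Prop where
  zero : ∀ s, B 0 s = 0
  top : B (d + 1) = U
  box : ∀ h, 1 ≤ h → h ≤ d → C.Box (B h)
  lt : ∀ h, h ≤ d → ∀ s, B h s < B (h + 1) s

theorem Strict.le {d : ℕ} {U : ZMod f → ℤ} {B : ℕ → ZMod f → ℤ} (hB : C.Strict d U B) :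
    ∀ h, h ≤ d + 1 → ∀ s, (h : ℤ) ≤ B h s := by
  intro h
  induction h with
  | zero => intro _ s; rw [hB.zero]; rfl
  | succ h ih =>
    intro hd s
    have h1 := ih (by omega) s
    have h2 := hB.lt h (by omega) s
    push_cast; omega

theorem exists_greedy (d : ℕ) (U : ZMod f → ℤ)
    (h : 1 ≤ d → ∃ Y, C.Box Y ∧ ∀ s, (d : ℤ) ≤ Y s ∧ Y s < U s) : ∃ G, C.Greedy d U G := by
  induction d generalizing U with
  | zero => exact ⟨fun h => if h = 0 then 0 else U, by simp, by simp, fun h h1 h2 => by omega⟩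
  | succ d ih =>
    have h2 : (2 : ℤ) ≤ C.p := by exact_mod_cast C.two_le
    obtain ⟨P, hP⟩ := exists_best (lo := fun _ => ((d + 1 : ℕ) : ℤ)) (h (by omega))
    obtain ⟨G, hG⟩ := ih P (fun hd => by
      obtain ⟨Y, hY, hY'⟩ := exists_box_between (C := C) (h := (d : ℤ)) (by positivity)
        (b := fun s => P s - 1) (fun s => by
          have : ((d + 1 : ℕ) : ℤ) ≤ P s := (hP.1.2 s).1
          push_cast at this
          omega)
        (fun s => by
          have h3 := (hP.1.1 s).2
          simp only [n, content] at h3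
          linarith)
      exact ⟨Y, hY, fun s => ⟨(hY' s).1, by have := (hY' s).2; omega⟩⟩)
    refine ⟨fun h => if h = d + 1 + 1 then U else G h, ?_, ?_, ?_⟩
    · intro s; simpa using hG.zero s
    · simp
    · intro h h1 hd
      rcases hd.lt_or_eq with h3 | rfl
      · have := hG.best h h1 (by omega)
        simp only [show h + 1 ≠ d + 1 + 1 by omega, show h ≠ d + 1 + 1 by omega, if_false]
        exact this
      · simpa [hG.top] using hP

theorem Greedy.strict {d : ℕ} {U : ZMod f → ℤ} {G : ℕ → ZMod f → ℤ} (hG : C.Greedy d U G)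
    (hU : ∀ s, 0 < U s) : C.Strict d U G where
  zero := hG.zero
  top := hG.top
  box h h1 hd := (hG.best h h1 hd).1.1
  lt h hd s := by
    rcases Nat.eq_zero_or_pos h with rfl | h1
    · rw [hG.zero]
      rcases Nat.eq_zero_or_pos d with rfl | h2
      · rw [hG.top]; exact hU s
      · have : ((1 : ℕ) : ℤ) ≤ G 1 s := ((hG.best 1 le_rfl h2).1.2 s).1
        push_cast at this
        simp only [zero_add]
        omega
    · exact ((hG.best h h1 hd).1.2 s).2

/-- The sum of the costs of the levels `1, …, d`. -/
noncomputable def total (C : Profile f) (d : ℕ) (B : ℕ → ZMod f → ℤ) : ℤ :=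
  ∑ h ∈ Finset.Icc 1 d, C.cost (B h)

theorem total_succ (d : ℕ) (B : ℕ → ZMod f → ℤ) :
    C.total (d + 1) B = C.total d B + C.cost (B (d + 1)) :=
  Finset.sum_Icc_succ_top (by omega) _

theorem total_congr {d : ℕ} {B B' : ℕ → ZMod f → ℤ} (h : ∀ h, 1 ≤ h → h ≤ d → B h = B' h) :
    C.total d B = C.total d B' :=
  Finset.sum_congr rfl fun i hi => by
    rw [Finset.mem_Icc] at hi
    rw [h i hi.1 hi.2]

/-- By induction, an optimal family is greedy below its own level `d + 1`, and its level `d + 1` is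
cheapest in its window; so it forms a `Duel` with the greedy family and cannot differ from it. -/
theorem greedy_of_optimal (d : ℕ) : ∀ (U : ZMod f → ℤ) (G B : ℕ → ZMod f → ℤ), C.Greedy d U G →
    C.Strict d U B → (∀ B', C.Strict d U B' → C.total d B ≤ C.total d B') →
    ∀ h, 1 ≤ h → h ≤ d → B h = G h := by
  induction d with
  | zero => intro U G B _ _ _ h h1 h2; omega
  | succ d ih =>
    intro U G B hG hB hopt
    have hUpos : ∀ s, 0 < U s := by
      intro s
      have h1 := hB.le (d + 1 + 1) le_rfl s
      rw [hB.top] at h1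
      push_cast at h1
      omega
    obtain ⟨G', hG'⟩ := exists_greedy (C := C) d (B (d + 1)) (fun hd =>
      ⟨B d, hB.box d hd (by omega), fun s => ⟨hB.le d (by omega) s, hB.lt d (by omega) s⟩⟩)
    have hB' : C.Strict d (B (d + 1)) B :=
      ⟨hB.zero, rfl, fun h h1 hd => hB.box h h1 (by omega), fun h hd => hB.lt h (by omega)⟩
    have heq := ih _ G' B hG' hB' (fun B' hs => by
      have hs' : C.Strict (d + 1) U (fun h => if h = d + 1 + 1 then U else B' h) := by
        refine ⟨fun s => by simpa using hs.zero s, by simp, fun h h1 hd => ?_, fun h hd => ?_⟩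
        · simp only [show h ≠ d + 1 + 1 by omega, if_false]
          rcases hd.lt_or_eq with h3 | rfl
          · exact hs.box h h1 (by omega)
          · rw [hs.top]; exact hB.box _ h1 le_rfl
        · rcases hd.lt_or_eq with h3 | rfl
          · simp only [show h + 1 ≠ d + 1 + 1 by omega, show h ≠ d + 1 + 1 by omega, if_false]
            exact hs.lt h (by omega)
          · simp only [if_true, show d + 1 ≠ d + 1 + 1 by omega, if_false]
            rw [hs.top, ← hB.top]
            exact hB.lt _ le_rfl
      have h1 := hopt _ hs'
      rw [total_succ, total_succ] at h1
      simp only [show d + 1 ≠ d + 1 + 1 by omega, if_false] at h1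
      rw [hs.top, total_congr (C := C) (d := d) (B := fun h => if h = d + 1 + 1 then U else B' h) (B' := B')
        (fun h _ hd => by simp only [show h ≠ d + 1 + 1 by omega, if_false])] at h1
      omega)
    have hbestlow : ∀ h, 1 ≤ h → h ≤ d → C.Best (fun _ => (h : ℤ)) (B (h + 1)) (B h) := by
      intro h h1 hd
      have h3 := hG'.best h h1 hd
      rw [← heq h h1 hd] at h3
      rcases hd.lt_or_eq with h4 | rfl
      · rwa [← heq (h + 1) (by omega) (by omega)] at h3
      · rwa [hG'.top] at h3
    have hbesttop : C.Best (fun s => B d s + 1) U (B (d + 1)) := by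
      refine ⟨⟨hB.box _ (by omega) le_rfl, fun s => ⟨hB.lt d (by omega) s, ?_⟩⟩, fun Y hY hY' => ?_⟩
      · rw [← hB.top]; exact hB.lt _ le_rfl s
      · have hs' : C.Strict (d + 1) U (fun h => if h = d + 1 then Y else B h) := by
          refine ⟨fun s => by simpa using hB.zero s, by simpa using hB.top, fun h h1 hd => ?_,
            fun h hd s => ?_⟩
          · split_ifs
            · exact hY
            · exact hB.box h h1 hd
          · have : B d s + 1 ≤ Y s ∧ Y s < U s := hY' s
            split_ifs with h3 h4 h4
            · omega
            · rw [h3, hB.top]; exact this.2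
            · rw [show h = d by omega]; omega
            · exact hB.lt h hd s
        have h1 := hopt _ hs'
        rw [total_succ, total_succ] at h1
        simp only [if_true] at h1
        rw [total_congr (C := C) (d := d) (B := fun h => if h = d + 1 then Y else B h) (B' := B)
          (fun h _ hd => by simp only [show h ≠ d + 1 by omega, if_false])] at h1
        omega
    have D : C.Duel (d + 1) G B (fun h s => if h ≤ d then (h : ℤ) else B d s + 1) := by
      refine ⟨hG.best, ?_, ?_, ?_, ?_, hB.zero, by rw [hG.top, hB.top]⟩
      · intro h h1 hd
        rcases hd.lt_or_eq with h3 | rfl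
        · simp only [show h ≤ d by omega, if_true]
          exact hbestlow h h1 (by omega)
        · simp only [show ¬ d + 1 ≤ d by omega, if_false]
          rw [hB.top]
          exact hbesttop
      · intro h h1 hd
        simp only [show h ≤ d by omega, if_true]
      · intro h h1 hd s
        split_ifs with h3
        · exact le_rfl
        · have := hB.le d (by omega) s
          rw [show h = d + 1 by omega]
          push_cast; omega
      · intro h hd s
        have := hB.le h (by omega) s
        split_ifs with h3
        · push_cast; omega
        · rw [show h = d by omega]
    intro h h1 hd
    by_contra hne
    have h3 := D.sum_cost_lt ⟨h, h1, hd, hne⟩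
    have h4 := hopt G (hG.strict hUpos)
    unfold total at h4
    omega

theorem total_nonneg (d : ℕ) (B : ℕ → ZMod f → ℤ) : 0 ≤ C.total d B :=
  Finset.sum_nonneg fun h _ => C.cost_nonneg (B h)

theorem greedy_optimal {d : ℕ} {U : ZMod f → ℤ} {G B : ℕ → ZMod f → ℤ} (hG : C.Greedy d U G)
    (hB : C.Strict d U B) : C.total d G ≤ C.total d B ∧
      (C.total d B ≤ C.total d G → ∀ h, 1 ≤ h → h ≤ d → B h = G h) := by
  obtain ⟨B₀, hB₀, hmin⟩ := (measure fun B => (C.total d B).toNat).wf.has_min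
    {B | C.Strict d U B} ⟨B, hB⟩
  have hopt : ∀ B', C.Strict d U B' → C.total d B₀ ≤ C.total d B' := by
    intro B' hB'
    have h1 := hmin B' hB'
    have h2 := C.total_nonneg d B'
    have h3 := C.total_nonneg d B₀
    change ¬ ((C.total d B').toNat < (C.total d B₀).toNat) at h1
    omega
  have h1 := total_congr (C := C) (greedy_of_optimal d U G B₀ hG hB₀ hopt)
  refine ⟨by rw [← h1]; exact hopt B hB, fun hle => ?_⟩
  exact greedy_of_optimal d U G B hG hB (fun B' hB' => hle.trans (by rw [← h1]; exact hopt B' hB'))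

theorem box_bound {Y : ZMod f → ℤ} (hY : C.Box Y) (t : ZMod f) : Y t < (∑ s, C.N s : ℕ) + 1 := by
  have h2 : (2 : ℤ) ≤ C.p := by exact_mod_cast C.two_le
  obtain ⟨s, -, hs⟩ := Finset.exists_max_image (Finset.univ : Finset (ZMod f)) Y
    ⟨0, Finset.mem_univ _⟩
  have h1 := hs (s - 1) (Finset.mem_univ _)
  have h3 := (hY s).2
  have h4 : C.N s ≤ ∑ s, C.N s := Finset.single_le_sum (fun _ _ => Nat.zero_le _) (Finset.mem_univ s)
  have h5 := hs t (Finset.mem_univ _)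
  simp only [n, content] at h3
  rcases le_or_gt (Y s) 0 with h6 | h6
  · omega
  · have : Y s ≤ C.N s := by nlinarith
    omega

/-- A strictly increasing family of box vectors `B 0 = 0 < B 1 < ⋯ < B d`. -/
structure Chain (C : Profile f) (d : ℕ) (B : ℕ → ZMod f → ℤ) : Prop where
  zero : ∀ s, B 0 s = 0
  box : ∀ h, h ≤ d → C.Box (B h)
  lt : ∀ h, h < d → ∀ s, B h s < B (h + 1) s

/-- If some box vector has all entries at least `d`, there is a unique chain of least total cost, and
the atom counts along it are monotone. -/
theorem exists_unique_chain {d : ℕ} (hfeas : ∃ Y, C.Box Y ∧ ∀ s, (d : ℤ) ≤ Y s) :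
    ∃ G, C.Chain d G ∧ (∀ h, h < d → ∀ s, C.n (G h) s ≤ C.n (G (h + 1)) s) ∧
      ∀ B, C.Chain d B → C.total d G ≤ C.total d B ∧
        (C.total d B ≤ C.total d G → ∀ h, h ≤ d → B h = G h) := by
  set U : ZMod f → ℤ := fun _ => (∑ s, C.N s : ℕ) + 1 with hU
  obtain ⟨Y, hY, hY'⟩ := hfeas
  obtain ⟨G, hG⟩ := exists_greedy (C := C) d U (fun _ => ⟨Y, hY, fun s => ⟨hY' s, box_bound hY s⟩⟩)
  have hS := hG.strict (fun s => by simp only [hU]; positivity)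
  have hbox0 : ∀ Z : ZMod f → ℤ, (∀ s, Z s = 0) → C.Box Z := fun Z hZ s => by
    simp [n, content, hZ]
  have hC : C.Chain d G := ⟨hG.zero, fun h hd => by
    rcases Nat.eq_zero_or_pos h with rfl | h1
    · exact hbox0 _ hG.zero
    · exact hS.box h h1 hd, fun h hd => hS.lt h hd.le⟩
  refine ⟨G, hC, fun h hd s => ?_, fun B hB => ?_⟩
  · rcases Nat.eq_zero_or_pos h with rfl | h1
    · have := (hC.box 1 (by omega) s).1
      have e : C.n (G 0) s = 0 := by simp [n, content, hG.zero]
      rw [e]; exact this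
    · have D : C.Duel d G G (fun h _ => (h : ℤ)) :=
        ⟨hG.best, hG.best, fun _ _ _ => rfl, fun _ _ _ _ => le_rfl, fun h hd s => by
          have := hS.le h (by omega) s; push_cast; omega, hG.zero, rfl⟩
      exact D.n_mono_succ h1 hd s
  · have hBS : C.Strict d U (fun h => if h = d + 1 then U else B h) := by
      refine ⟨fun s => by simpa using hB.zero s, by simp, fun h h1 hd => ?_, fun h hd s => ?_⟩
      · simp only [show h ≠ d + 1 by omega, if_false]
        exact hB.box h hd
      · simp only [show h ≠ d + 1 by omega, if_false]
        split_ifs with h3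
        · exact box_bound (hB.box h hd) s
        · exact hB.lt h (by omega) s
    have h1 := greedy_optimal hG hBS
    rw [total_congr (C := C) (d := d) (B := fun h => if h = d + 1 then U else B h) (B' := B)
      (fun h _ hd => by simp only [show h ≠ d + 1 by omega, if_false])] at h1
    refine ⟨h1.1, fun hle h hd => ?_⟩
    rcases Nat.eq_zero_or_pos h with rfl | h2
    · funext s; rw [hB.zero, hG.zero]
    · have := h1.2 hle h h2 hd
      simpa only [show h ≠ d + 1 by omega, if_false] using this

end Profile
end Sheats

/-! ### The profile of a base-`p` expansion -/

namespace Sheats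
variable {f : ℕ} [NeZero f]

/-- The digits `dg j` for `j < L`, continued by the value `p - 1`, so that every class has
infinitely many atoms. -/
def extDigit (p : ℕ) (dg : ℕ → ℕ) (L j : ℕ) : ℕ := if j < L then dg j else p - 1

/-- The number of atoms of class `s` at positions below `j`. -/
def atoms (f p : ℕ) (dg : ℕ → ℕ) (L : ℕ) (s : ZMod f) (j : ℕ) : ℕ :=
  ∑ i ∈ Finset.range j, if (i : ZMod f) = s then extDigit p dg L i else 0

theorem atoms_succ (p : ℕ) (dg : ℕ → ℕ) (L : ℕ) (s : ZMod f) (j : ℕ) :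
    atoms f p dg L s (j + 1) =
      atoms f p dg L s j + if (j : ZMod f) = s then extDigit p dg L j else 0 :=
  Finset.sum_range_succ _ _

theorem atoms_mono (p : ℕ) (dg : ℕ → ℕ) (L : ℕ) (s : ZMod f) :
    Monotone (atoms f p dg L s) :=
  monotone_nat_of_le_succ fun j => by rw [atoms_succ]; omega

theorem exists_lt_atoms {p : ℕ} (hp : 2 ≤ p) (dg : ℕ → ℕ) (L : ℕ) (s : ZMod f) (i : ℕ) :
    ∃ j, i < atoms f p dg L s (j + 1) := by
  induction i with
  | zero =>
    refine ⟨f * L + s.val, ?_⟩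
    rw [atoms_succ, if_pos (by simp)]
    have h1 : 0 < f := Nat.pos_of_ne_zero (NeZero.ne f)
    have : ¬ f * L + s.val < L := by nlinarith [Nat.zero_le s.val]
    rw [extDigit, if_neg this]
    omega
  | succ i ih =>
    obtain ⟨j, hj⟩ := ih
    refine ⟨f * (L + j + 1) + s.val, ?_⟩
    rw [atoms_succ, if_pos (by simp)]
    have h1 : 0 < f := Nat.pos_of_ne_zero (NeZero.ne f)
    have h2 : L + j + 1 ≤ f * (L + j + 1) := Nat.le_mul_of_pos_left _ h1
    have h3 := atoms_mono p dg L s (show j + 1 ≤ f * (L + j + 1) + s.val by omega)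
    rw [extDigit, if_neg (by omega)]
    omega

/-- The profile with `dg j` atoms at each position `j < L`, that is, the powers `p ^ j` occurring in
the base-`p` expansion `∑ dg j * p ^ j`. -/
noncomputable def profile (f : ℕ) [NeZero f] (p : ℕ) (hp : 2 ≤ p) (dg : ℕ → ℕ) (L : ℕ)
    (hdg : ∀ j, dg j < p) : Profile f where
  p := p
  two_le := hp
  N s := atoms f p dg L s L
  pos s i := Nat.find (exists_lt_atoms hp dg L s i)
  mono s i i' h := Nat.find_mono fun j hj => by omega
  cast_pos s i := by
    set j := Nat.find (exists_lt_atoms hp dg L s i) with hj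
    have h1 : i < atoms f p dg L s (j + 1) := Nat.find_spec (exists_lt_atoms hp dg L s i)
    have h2 : atoms f p dg L s j ≤ i := by
      rcases Nat.eq_zero_or_pos j with h | h
      · rw [h]; simp [atoms]
      · have := Nat.find_min (exists_lt_atoms hp dg L s i) (m := j - 1) (by omega)
        rw [show j - 1 + 1 = j by omega] at this
        omega
    rw [atoms_succ] at h1
    by_contra hc
    rw [if_neg hc] at h1
    omega
  lt_pos s i := by
    set j := Nat.find (exists_lt_atoms hp dg L s i) with hj
    have h2 : atoms f p dg L s j ≤ i := by
      rcases Nat.eq_zero_or_pos j with h | h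
      · rw [h]; simp [atoms]
      · have := Nat.find_min (exists_lt_atoms hp dg L s i) (m := j - 1) (by omega)
        rw [show j - 1 + 1 = j by omega] at this
        omega
    have hD : extDigit p dg L j ≤ p - 1 := by
      unfold extDigit
      have := hdg j
      split_ifs <;> omega
    rw [Nat.lt_find_iff]
    intro m hm hlt
    have h3 := atoms_mono p dg L s (show m + 1 ≤ j + 1 by omega)
    rw [atoms_succ p dg L s j] at h3
    split_ifs at h3 <;> omega

section
variable {p : ℕ} {hp : 2 ≤ p} {dg : ℕ → ℕ} {L : ℕ} {hdg : ∀ j, dg j < p}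

theorem pos_le_iff {s : ZMod f} {i j : ℕ} :
    (profile f p hp dg L hdg).pos s i ≤ j ↔ i < atoms f p dg L s (j + 1) := by
  change Nat.find _ ≤ j ↔ _
  rw [Nat.find_le_iff]
  constructor
  · rintro ⟨m, hm, h⟩
    exact h.trans_le (atoms_mono p dg L s (by omega))
  · intro h; exact ⟨j, le_rfl, h⟩

theorem pos_eq_iff {s : ZMod f} {i j : ℕ} :
    (profile f p hp dg L hdg).pos s i = j ↔
      atoms f p dg L s j ≤ i ∧ i < atoms f p dg L s (j + 1) := by
  rw [le_antisymm_iff, pos_le_iff]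
  rcases j with _ | j
  · simp [atoms]
  · have : j + 1 ≤ (profile f p hp dg L hdg).pos s i ↔
        ¬ (profile f p hp dg L hdg).pos s i ≤ j := by omega
    rw [this, pos_le_iff]
    omega

theorem cnt_profile (j : ℕ) {m : ℤ} (hm : 0 ≤ m) :
    (profile f p hp dg L hdg).cnt j m =
      min m (atoms f p dg L j (j + 1)) - min m (atoms f p dg L j j) := by
  unfold Profile.cnt
  have h1 := atoms_mono p dg L (j : ZMod f) (show j ≤ j + 1 by omega)
  have : (Finset.range m.toNat).filter (fun i => (profile f p hp dg L hdg).pos (j : ZMod f) i = j)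
      = Finset.Ico (min m.toNat (atoms f p dg L j j)) (min m.toNat (atoms f p dg L j (j + 1))) := by
    ext i
    simp only [Finset.mem_filter, Finset.mem_range, pos_eq_iff, Finset.mem_Ico]
    omega
  rw [this, Nat.card_Ico]
  omega

theorem sum_cnt (s : ZMod f) {m : ℤ} (hm : 0 ≤ m) (R : ℕ) :
    ∑ j ∈ Finset.range R, (if (j : ZMod f) = s then (profile f p hp dg L hdg).cnt j m else 0)
      = min m (atoms f p dg L s R) := by
  induction R with
  | zero => simp [atoms, hm]
  | succ R ih =>
    rw [Finset.sum_range_succ, ih]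
    split_ifs with h
    · rw [cnt_profile R hm, h]; ring
    · rw [atoms_succ, if_neg h]; simp

/-- The sum of the `x j`, `j < L`, over the `j` in the residue class `s`. -/
def classSum (L : ℕ) (x : ℕ → ℤ) (s : ZMod f) : ℤ :=
  ∑ j ∈ Finset.range L, if (j : ZMod f) = s then x j else 0

theorem N_eq (s : ZMod f) :
    ((profile f p hp dg L hdg).N s : ℤ) = classSum L (fun j => (dg j : ℤ)) s := by
  change ((atoms f p dg L s L : ℕ) : ℤ) = _
  unfold atoms classSum
  push_cast
  apply Finset.sum_congr rfl
  intro j hj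
  rw [extDigit, if_pos (Finset.mem_range.1 hj)]

theorem classSum_dig {Y : ZMod f → ℤ} (hY : (profile f p hp dg L hdg).Box Y) (s : ZMod f) :
    classSum L (fun j => (profile f p hp dg L hdg).dig j Y) s
      = (profile f p hp dg L hdg).n Y s := by
  have h1 := hY s
  have h2 := sum_cnt (hp := hp) (hdg := hdg) (L := L) s h1.1 L
  have h3 : (((profile f p hp dg L hdg).N s : ℕ) : ℤ) = (atoms f p dg L s L : ℕ) := rfl
  rw [min_eq_left (by omega)] at h2
  rw [← h2]
  apply Finset.sum_congr rfl
  intro j _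
  split_ifs with h
  · change (profile f p hp dg L hdg).cnt j ((profile f p hp dg L hdg).n Y j) = _
    rw [h]
  · rfl

theorem dig_le {Y : ZMod f → ℤ} (hY : (profile f p hp dg L hdg).Box Y) {j : ℕ} (hj : j < L) :
    (profile f p hp dg L hdg).dig j Y ≤ dg j := by
  unfold Profile.dig
  rw [cnt_profile j (hY _).1, atoms_succ, if_pos rfl, extDigit, if_pos hj]
  push_cast
  omega

theorem dig_eq_zero' {Y : ZMod f → ℤ} (hY : (profile f p hp dg L hdg).Box Y) {j : ℕ} (hj : L ≤ j) :
    (profile f p hp dg L hdg).dig j Y = 0 := by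
  unfold Profile.dig
  have h1 := hY (j : ZMod f)
  have h3 : (((profile f p hp dg L hdg).N j : ℕ) : ℤ) = (atoms f p dg L j L : ℕ) := rfl
  have h4 := atoms_mono p dg L (j : ZMod f) hj
  have h5 := atoms_mono p dg L (j : ZMod f) (show j ≤ j + 1 by omega)
  rw [cnt_profile j h1.1]
  omega

theorem cost_eq_digits {Y : ZMod f → ℤ} (hY : (profile f p hp dg L hdg).Box Y) :
    (profile f p hp dg L hdg).cost Y
      = ∑ j ∈ Finset.range L, (profile f p hp dg L hdg).dig j Y * (p : ℤ) ^ j := by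
  rw [Profile.cost_eq _ hY]
  change ∑ j ∈ Finset.range (profile f p hp dg L hdg).top,
    (profile f p hp dg L hdg).dig j Y * (p : ℤ) ^ j = _
  rcases le_total (profile f p hp dg L hdg).top L with h | h
  · apply Finset.sum_subset (Finset.range_subset_range.2 h)
    intro j _ hj
    rw [Profile.dig_eq_zero _ hY (by simpa using hj), zero_mul]
  · symm
    apply Finset.sum_subset (Finset.range_subset_range.2 h)
    intro j _ hj
    rw [dig_eq_zero' hY (by simpa using hj), zero_mul]

theorem sum_class_weight (x : ℕ → ℤ) (c : ZMod f → ℤ) :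
    ∑ j ∈ Finset.range L, x j * c j = ∑ s, classSum L x s * c s := by
  unfold classSum
  simp only [Finset.sum_mul]
  rw [Finset.sum_comm]
  apply Finset.sum_congr rfl
  intro j _
  simp [ite_mul]

/-- A vector of sub-digits `0 ≤ x ≤ dg` whose class sums are the content of `Y` has value at least
`cost Y`, with equality only for the digits of `cost Y`. -/
theorem cost_le_of_content {Y : ZMod f → ℤ} (hY : (profile f p hp dg L hdg).Box Y) {x : ℕ → ℤ}
    (hx0 : ∀ j, j < L → 0 ≤ x j) (hx : ∀ j, j < L → x j ≤ dg j)
    (hxY : ∀ s, classSum L x s = (profile f p hp dg L hdg).n Y s) :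
    (profile f p hp dg L hdg).cost Y ≤ ∑ j ∈ Finset.range L, x j * (p : ℤ) ^ j ∧
    (∑ j ∈ Finset.range L, x j * (p : ℤ) ^ j = (profile f p hp dg L hdg).cost Y →
      ∀ j, j < L → x j = (profile f p hp dg L hdg).dig j Y) := by
  have hp1 : (1 : ℤ) < p := by exact_mod_cast hp
  set P := profile f p hp dg L hdg with hP
  -- the last position of class `s` used by `Y`: full below, empty above
  set T : ZMod f → ℕ := fun s => P.pos s (P.n Y s - 1).toNat with hT
  have hfull : ∀ j, j < L → j < T j → x j ≤ P.dig j Y := by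
    intro j hjL hj
    refine (hx j hjL).trans (le_of_eq ?_)
    have h1 := hY (j : ZMod f)
    have h2 : ¬ P.pos (j : ZMod f) (P.n Y j - 1).toNat ≤ j := by simpa [hT] using hj
    rw [hP, pos_le_iff, ← hP] at h2
    have h5 := atoms_mono p dg L (j : ZMod f) (show j ≤ j + 1 by omega)
    have h6 := atoms_succ p dg L (j : ZMod f) j
    rw [if_pos rfl, extDigit, if_pos hjL] at h6
    unfold Profile.dig
    by_cases h0 : 1 ≤ P.n Y j
    · rw [hP, cnt_profile j h1.1]
      omega
    -- `Y` uses no atom of the class of `j`, and `j` lies below the first one, so `dg j = 0`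
    · have h7 := (show P.n Y j = 0 by omega)
      have h8 : dg j = 0 := by
        rw [h7] at h2
        simp at h2
        omega
      rw [h7, h8, hP, cnt_profile j le_rfl]
      omega
  have hempty : ∀ j, j < L → T j < j → P.dig j Y ≤ x j := by
    intro j hjL hj
    refine le_trans (le_of_eq ?_) (hx0 j hjL)
    have h1 := hY (j : ZMod f)
    have h2 : P.pos (j : ZMod f) (P.n Y j - 1).toNat ≤ j - 1 := by
      change P.pos (j : ZMod f) (P.n Y j - 1).toNat < j at hj
      omega
    rw [hP, pos_le_iff, ← hP, show j - 1 + 1 = j by omega] at h2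
    have h5 := atoms_mono p dg L (j : ZMod f) (show j ≤ j + 1 by omega)
    unfold Profile.dig
    rw [hP, cnt_profile j h1.1]
    omega
  have hterm : ∀ j ∈ Finset.range L,
      0 ≤ (x j - P.dig j Y) * ((p : ℤ) ^ j - (p : ℤ) ^ (T j)) := by
    intro j hj
    rw [Finset.mem_range] at hj
    rcases lt_trichotomy j (T j) with h | h | h
    · have := hfull j hj h
      have := pow_le_pow_right₀ hp1.le h.le
      nlinarith
    · rw [← h]; simp
    · have := hempty j hj h
      have := pow_le_pow_right₀ hp1.le h.le
      nlinarith
  have hdiff : ∑ j ∈ Finset.range L, x j * (p : ℤ) ^ j - P.cost Y =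
      ∑ j ∈ Finset.range L, (x j - P.dig j Y) * ((p : ℤ) ^ j - (p : ℤ) ^ (T j)) := by
    have h1 := sum_class_weight (L := L) x (fun s => (p : ℤ) ^ (T s))
    have h2 := sum_class_weight (L := L) (fun j => P.dig j Y) (fun s => (p : ℤ) ^ (T s))
    simp only [hxY] at h1
    simp only [hP, classSum_dig hY] at h2
    simp only [← hP] at h2
    rw [← h2] at h1
    rw [cost_eq_digits hY, ← hP]
    simp only [sub_mul, mul_sub, Finset.sum_sub_distrib]
    linarith
  have hnn := Finset.sum_nonneg hterm
  refine ⟨by linarith, fun heq => ?_⟩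
  rw [heq, sub_self] at hdiff
  have hz := (Finset.sum_eq_zero_iff_of_nonneg hterm).1 hdiff.symm
  have hne : ∀ j, j < L → j ≠ T j → x j = P.dig j Y := by
    intro j hj hjT
    have := hz j (Finset.mem_range.2 hj)
    rcases mul_eq_zero.1 this with h | h
    · omega
    · exfalso
      apply hjT
      have h3 : p ^ j = p ^ (T j) := by exact_mod_cast sub_eq_zero.1 h
      exact Nat.pow_right_injective hp h3
  intro j hj
  by_cases hjT : j = T j
  · have h1 := hxY (j : ZMod f)
    have h3 := classSum_dig hY (j : ZMod f)
    rw [← hP] at h3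
    rw [← h3, ← sub_eq_zero] at h1
    unfold classSum at h1
    rw [← Finset.sum_sub_distrib, Finset.sum_eq_single j] at h1
    · simp at h1; omega
    · intro i hi hij
      split_ifs with h4
      · rw [hne i (Finset.mem_range.1 hi)]
        · ring
        · intro h5; apply hij; rw [h5, h4, ← hjT]
      · simp
    · intro h; exact absurd (Finset.mem_range.2 hj) h
  · exact hne j hj hjT

end
end Sheats

/-! ### Carry-free decompositions as chains -/

namespace Sheats
variable {f : ℕ} [NeZero f]

/-- The digit sum rotated by `t`: every `p ^ j` is replaced by `p` to the representative of
`j - 1 - t` in `[0, f)`. It is congruent to `p ^ (-1 - t) * ∑ x j * p ^ j` modulo `p ^ f - 1`. -/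
def rotSum (p L : ℕ) (x : ℕ → ℤ) (t : ZMod f) : ℤ :=
  ∑ j ∈ Finset.range L, x j * (p : ℤ) ^ ((j : ZMod f) - 1 - t).val

theorem val_sub_one {a : ZMod f} (ha : a ≠ 0) : a.val = (a - 1).val + 1 := by
  have h1 := ZMod.val_lt (a - 1)
  have h2 : ((((a - 1).val + 1 : ℕ)) : ZMod f) = a := by
    push_cast; rw [ZMod.natCast_zmod_val]; ring
  rcases Nat.lt_or_ge ((a - 1).val + 1) f with h | h
  · rw [← Nat.mod_eq_of_lt h, ← ZMod.val_natCast, h2]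
  · exfalso
    apply ha
    rw [← h2, show (a - 1).val + 1 = f by omega]
    simp

theorem val_neg_one' : (-1 : ZMod f).val + 1 = f := by
  obtain ⟨m, hm⟩ := Nat.exists_eq_succ_of_ne_zero (NeZero.ne f)
  subst hm
  rw [ZMod.val_neg_one]

theorem rotSum_content (p L : ℕ) (x : ℕ → ℤ) (t : ZMod f) :
    content p (rotSum p L x) t = ((p : ℤ) ^ f - 1) * classSum L x t := by
  unfold content rotSum classSum
  rw [Finset.mul_sum, Finset.mul_sum, ← Finset.sum_sub_distrib]
  apply Finset.sum_congr rfl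
  intro j _
  have e : (j : ZMod f) - 1 - (t - 1) = (j : ZMod f) - t := by ring
  have e' : (j : ZMod f) - 1 - t = (j : ZMod f) - t - 1 := by ring
  rw [e, e']
  split_ifs with h
  · rw [h, sub_self, zero_sub, ZMod.val_zero, pow_zero]
    conv_rhs => rw [← val_neg_one' (f := f), pow_succ]
    ring
  · rw [val_sub_one (sub_ne_zero.2 h), pow_succ]
    ring

theorem dvd_pow_sub_pow {p : ℤ} {a b : ℕ} (h : (a : ZMod f) = b) : p ^ f - 1 ∣ p ^ a - p ^ b := by
  rw [ZMod.natCast_eq_natCast_iff] at h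
  have hf : p ^ f ≡ 1 [ZMOD p ^ f - 1] := (Int.modEq_sub _ _)
  have key : ∀ a : ℕ, p ^ a ≡ p ^ (a % f) [ZMOD p ^ f - 1] := by
    intro a
    conv_lhs => rw [← Nat.div_add_mod a f, pow_add, pow_mul]
    simpa using (hf.pow (a / f)).mul_right (p ^ (a % f))
  have := (key a).trans ((by rw [h] : p ^ (a % f) = p ^ (b % f)) ▸ (key b).symm)
  exact this.symm.dvd

theorem rotSum_modEq (p L : ℕ) (x : ℕ → ℤ) (t : ZMod f) :
    ((p : ℤ) ^ f - 1) ∣ rotSum p L x t -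
      (p : ℤ) ^ (-1 - t).val * ∑ j ∈ Finset.range L, x j * (p : ℤ) ^ j := by
  unfold rotSum
  rw [Finset.mul_sum, ← Finset.sum_sub_distrib]
  apply Finset.dvd_sum
  intro j _
  have h : (((((j : ZMod f) - 1 - t).val : ℕ)) : ZMod f) = (((-1 - t).val + j : ℕ) : ZMod f) := by
    push_cast
    rw [ZMod.natCast_zmod_val, ZMod.natCast_zmod_val]; ring
  have := (dvd_pow_sub_pow (p := (p : ℤ)) h).mul_left (x j)
  convert this using 1
  rw [pow_add]; ring

theorem rotSum_add (p L : ℕ) (x y : ℕ → ℤ) (t : ZMod f) :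
    rotSum p L (fun j => x j + y j) t = rotSum p L x t + rotSum p L y t := by
  unfold rotSum
  rw [← Finset.sum_add_distrib]
  exact Finset.sum_congr rfl fun j _ => by ring

/-- `μ j i` splits the `j`-th digit `dg j` among the indices `i = 0, …, d` such that each column value
`∑ μ j i * p ^ j` with `i < d` is positive and divisible by `p ^ f - 1`. These are the index
matrices of the terms with nonzero coefficient in the expansion of the power sum. -/
structure Good (p f d L : ℕ) (dg : ℕ → ℕ) (μ : ℕ → ℕ → ℕ) : Prop where
  row : ∀ j, j < L → ∑ i ∈ Finset.range (d + 1), μ j i = dg j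
  pos : ∀ i, i < d → 0 < ∑ j ∈ Finset.range L, μ j i * p ^ j
  dvd : ∀ i, i < d → p ^ f - 1 ∣ ∑ j ∈ Finset.range L, μ j i * p ^ j

section
variable {p d L : ℕ} {dg : ℕ → ℕ} {μ : ℕ → ℕ → ℕ}

theorem Good.rotSum_col (hp : 2 ≤ p) (hμ : Good p f d L dg μ) {i : ℕ} (hi : i < d) (t : ZMod f) :
    ((p : ℤ) ^ f - 1 ∣ rotSum p L (fun j => (μ j i : ℤ)) t) ∧
      (p : ℤ) ^ f - 1 ≤ rotSum p L (fun j => (μ j i : ℤ)) t := by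
  have h1 : ((p : ℤ) ^ f - 1) ∣ ∑ j ∈ Finset.range L, (μ j i : ℤ) * (p : ℤ) ^ j := by
    have := Int.natCast_dvd_natCast.2 (hμ.dvd i hi)
    rw [Nat.cast_sub (Nat.one_le_pow _ _ (by omega))] at this
    push_cast at this
    exact this
  have h2 : ((p : ℤ) ^ f - 1 ∣ rotSum p L (fun j => (μ j i : ℤ)) t) := by
    have := rotSum_modEq p L (fun j => (μ j i : ℤ)) t
    exact (dvd_sub_left (h1.mul_left _)).1 this
  refine ⟨h2, Int.le_of_dvd ?_ h2⟩
  obtain ⟨j, hj, hne⟩ := Finset.exists_ne_zero_of_sum_ne_zero (hμ.pos i hi).ne'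
  apply Finset.sum_pos'
  · intro j _; positivity
  · refine ⟨j, hj, ?_⟩
    have : 0 < μ j i := Nat.pos_of_ne_zero fun h => hne (by simp [h])
    positivity

/-- The sum of the first `h` columns of `μ` in row `j`. -/
def partialSum (μ : ℕ → ℕ → ℕ) (h j : ℕ) : ℤ := ∑ i ∈ Finset.range h, (μ j i : ℤ)

theorem rotSum_partial_succ (h : ℕ) (t : ZMod f) :
    rotSum p L (partialSum μ (h + 1)) t =
      rotSum p L (partialSum μ h) t + rotSum p L (fun j => (μ j h : ℤ)) t := by
  rw [← rotSum_add]
  congr 1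
  funext j
  exact Finset.sum_range_succ _ _

theorem rotSum_partial_zero (t : ZMod f) : rotSum p L (partialSum μ 0) t = 0 := by
  simp [rotSum, partialSum]

/-- Each of the `d` columns contributes a positive multiple of `p ^ f - 1` to every rotated digit sum. -/
theorem Good.rotSum_ge (hp : 2 ≤ p) (hμ : Good p f d L dg μ) (t : ZMod f) :
    (d : ℤ) * ((p : ℤ) ^ f - 1) ≤ rotSum p L (fun j => (dg j : ℤ)) t := by
  have key : ∀ h, h ≤ d → (h : ℤ) * ((p : ℤ) ^ f - 1) ≤ rotSum p L (partialSum μ h) t := by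
    intro h
    induction h with
    | zero => intro _; rw [rotSum_partial_zero]; simp
    | succ h ih =>
      intro hd
      have h1 := ih (by omega)
      have h2 := (hμ.rotSum_col hp (show h < d by omega) t).2
      rw [rotSum_partial_succ]
      push_cast
      linarith
  refine (key d le_rfl).trans ?_
  unfold rotSum
  apply Finset.sum_le_sum
  intro j hj
  have h1 := hμ.row j (Finset.mem_range.1 hj)
  have : partialSum μ d j ≤ dg j := by
    unfold partialSum
    rw [Finset.sum_range_succ] at h1
    rw [← h1]; push_cast; omega
  exact mul_le_mul_of_nonneg_right this (by positivity)

/-- The rotated sums of the first `h` columns, divided by `p ^ f - 1`, form a chain in the profile of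
the digits. -/
theorem Good.chain {hp : 2 ≤ p} {hdg : ∀ j, dg j < p} (hμ : Good p f d L dg μ) :
    ∃ B, (profile f p hp dg L hdg).Chain d B ∧
      ∀ h, h ≤ d → ∀ s, classSum L (partialSum μ h) s = (profile f p hp dg L hdg).n (B h) s := by
  have hq : (0 : ℤ) < (p : ℤ) ^ f - 1 := by
    have : 1 < p ^ f := Nat.one_lt_pow (NeZero.ne f) (by omega)
    have : (1 : ℤ) < (p : ℤ) ^ f := by exact_mod_cast this
    omega
  set B : ℕ → ZMod f → ℤ := fun h t => rotSum p L (partialSum μ h) t / ((p : ℤ) ^ f - 1) with hB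
  have hdvd : ∀ h, h ≤ d → ∀ t : ZMod f, ((p : ℤ) ^ f - 1) ∣ rotSum p L (partialSum μ h) t := by
    intro h
    induction h with
    | zero => intro _ t; rw [rotSum_partial_zero]; simp
    | succ h ih =>
      intro hd t
      rw [rotSum_partial_succ]
      exact dvd_add (ih (by omega) t) (hμ.rotSum_col hp (by omega) t).1
  have hmul : ∀ h, h ≤ d → ∀ t, ((p : ℤ) ^ f - 1) * B h t = rotSum p L (partialSum μ h) t :=
    fun h hd t => Int.mul_ediv_cancel' (hdvd h hd t)
  have hn : ∀ h, h ≤ d → ∀ s, classSum L (partialSum μ h) s =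
      (profile f p hp dg L hdg).n (B h) s := by
    intro h hd s
    have h1 := rotSum_content p L (partialSum μ h) s
    unfold content at h1
    rw [← hmul h hd, ← hmul h hd] at h1
    apply mul_left_cancel₀ hq.ne'
    rw [← h1]
    simp only [Profile.n, content, profile]
    ring
  refine ⟨B, ⟨fun s => ?_, fun h hd s => ?_, fun h hd s => ?_⟩, hn⟩
  · simp [hB, rotSum_partial_zero]
  · rw [← hn h hd, N_eq]
    unfold classSum
    refine ⟨Finset.sum_nonneg fun j _ => ?_, Finset.sum_le_sum fun j hj => ?_⟩
    · split_ifs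
      · exact Finset.sum_nonneg fun _ _ => by positivity
      · exact le_rfl
    · split_ifs
      · change partialSum μ h j ≤ (dg j : ℤ)
        rw [← hμ.row j (Finset.mem_range.1 hj)]
        push_cast
        exact Finset.sum_le_sum_of_subset_of_nonneg (Finset.range_subset_range.2 (by omega))
          fun _ _ _ => by positivity
      · exact le_rfl
  · have h1 := hmul h hd.le s
    have h2 := hmul (h + 1) hd s
    rw [rotSum_partial_succ] at h2
    have h3 := (hμ.rotSum_col hp hd s).2
    nlinarith

/-- Summation by parts. -/
theorem sum_mul_index (M : ℕ → ℤ) (d : ℕ) :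
    ∑ i ∈ Finset.range (d + 1), (i : ℤ) * M i
      + ∑ h ∈ Finset.Icc 1 d, ∑ i ∈ Finset.range h, M i
      = d * ∑ i ∈ Finset.range (d + 1), M i := by
  induction d with
  | zero => simp
  | succ d ih =>
    rw [Finset.sum_range_succ, Finset.sum_Icc_succ_top (by omega), Finset.sum_range_succ _ (d + 1)]
    push_cast
    linear_combination ih

/-- The exponent of `X` attached to `μ` equals `d` times the number expanded minus the values of the
partial column sums, so maximizing the exponent means minimizing the total cost of the chain. -/
theorem Good.sum_index (hμ : Good p f d L dg μ) :
    ((∑ i ∈ Finset.range (d + 1), i * ∑ j ∈ Finset.range L, μ j i * p ^ j : ℕ) : ℤ) =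
      d * (∑ j ∈ Finset.range L, (dg j : ℤ) * (p : ℤ) ^ j)
      - ∑ h ∈ Finset.Icc 1 d, ∑ j ∈ Finset.range L, partialSum μ h j * (p : ℤ) ^ j := by
  have h1 := sum_mul_index (fun i => ∑ j ∈ Finset.range L, (μ j i : ℤ) * (p : ℤ) ^ j) d
  have h2 : ∀ h, ∑ i ∈ Finset.range h, ∑ j ∈ Finset.range L, (μ j i : ℤ) * (p : ℤ) ^ j =
      ∑ j ∈ Finset.range L, partialSum μ h j * (p : ℤ) ^ j := by
    intro h
    rw [Finset.sum_comm]
    simp only [partialSum, Finset.sum_mul]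
  simp only [h2] at h1
  have h3 : ∑ j ∈ Finset.range L, partialSum μ (d + 1) j * (p : ℤ) ^ j =
      ∑ j ∈ Finset.range L, (dg j : ℤ) * (p : ℤ) ^ j := by
    apply Finset.sum_congr rfl
    intro j hj
    rw [← hμ.row j (Finset.mem_range.1 hj)]
    simp [partialSum]
  rw [h3] at h1
  push_cast
  linarith

theorem feasible {hp : 2 ≤ p} {hdg : ∀ j, dg j < p}
    (h : ∀ t : ZMod f, (d : ℤ) * ((p : ℤ) ^ f - 1) ≤ rotSum p L (fun j => (dg j : ℤ)) t) :
    ∃ Y, (profile f p hp dg L hdg).Box Y ∧ ∀ s, (d : ℤ) ≤ Y s := by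
  have hq : (0 : ℤ) < (p : ℤ) ^ f - 1 := by
    have : 1 < p ^ f := Nat.one_lt_pow (NeZero.ne f) (by omega)
    have : (1 : ℤ) < (p : ℤ) ^ f := by exact_mod_cast this
    omega
  obtain ⟨Y, hY, hY'⟩ := Profile.exists_box_between (C := profile f p hp dg L hdg) (h := (d : ℤ))
    (by positivity) (b := fun t => rotSum p L (fun j => (dg j : ℤ)) t / ((p : ℤ) ^ f - 1))
    (fun t => (Int.le_ediv_iff_mul_le hq).2 (h t))
    (fun s => by
      rw [Int.le_ediv_iff_mul_le hq, N_eq]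
      have h1 := rotSum_content p L (fun j => (dg j : ℤ)) s
      have h2 := Int.ediv_mul_le (rotSum p L (fun j => (dg j : ℤ)) s) hq.ne'
      unfold content at h1
      change ((p : ℤ) * _ - _) * _ ≤ _
      have h3 : (0 : ℤ) ≤ p := by positivity
      nlinarith)
  exact ⟨Y, hY, fun s => (hY' s).1⟩

/-- If all rotated digit sums are at least `d * (p ^ f - 1)`, some good matrix is determined by its
exponent; it comes from the chain of least total cost, so its exponent is the largest one. -/
theorem exists_unique_good (hp : 2 ≤ p) (hdg : ∀ j, dg j < p)
    (h : ∀ t : ZMod f, (d : ℤ) * ((p : ℤ) ^ f - 1) ≤ rotSum p L (fun j => (dg j : ℤ)) t) :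
    ∃ μ₀, Good p f d L dg μ₀ ∧ ∀ μ, Good p f d L dg μ →
      ∑ i ∈ Finset.range (d + 1), i * ∑ j ∈ Finset.range L, μ j i * p ^ j =
        ∑ i ∈ Finset.range (d + 1), i * ∑ j ∈ Finset.range L, μ₀ j i * p ^ j →
      ∀ j, j < L → ∀ i, i ≤ d → μ j i = μ₀ j i := by
  set P := profile f p hp dg L hdg with hP
  have hq : (0 : ℤ) < (p : ℤ) ^ f - 1 := by
    have : 1 < p ^ f := Nat.one_lt_pow (NeZero.ne f) (by omega)
    have : (1 : ℤ) < (p : ℤ) ^ f := by exact_mod_cast this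
    omega
  obtain ⟨G, hG, hmono, huniq⟩ := Profile.exists_unique_chain (C := P) (feasible h)
  set μ₀ : ℕ → ℕ → ℕ := fun j i =>
    if i < d then (P.dig j (G (i + 1)) - P.dig j (G i)).toNat else (dg j - P.dig j (G d)).toNat
    with hμ₀
  have dig0 : ∀ j, P.dig j (G 0) = 0 := by
    intro j
    have : P.n (G 0) j = 0 := by simp [Profile.n, content, hG.zero]
    simp [Profile.dig, this, Profile.cnt]
  have hstep : ∀ j i, i < d → (μ₀ j i : ℤ) = P.dig j (G (i + 1)) - P.dig j (G i) := by
    intro j i hi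
    have h1 : P.dig j (G i) ≤ P.dig j (G (i + 1)) := P.cnt_mono j (hmono i hi _)
    simp only [hμ₀, if_pos hi]
    omega
  have hpart : ∀ j h, h ≤ d → partialSum μ₀ h j = P.dig j (G h) := by
    intro j h
    induction h with
    | zero => intro _; rw [dig0]; simp [partialSum]
    | succ h ih =>
      intro hd
      have e : partialSum μ₀ (h + 1) j = partialSum μ₀ h j + μ₀ j h := Finset.sum_range_succ _ _
      rw [e, ih (by omega), hstep j h hd]
      ring
  have hcostdvd : ∀ h, h ≤ d →
      ((p : ℤ) ^ f - 1) ∣ ∑ j ∈ Finset.range L, P.dig j (G h) * (p : ℤ) ^ j := by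
    intro h hd
    have e : rotSum p L (fun j => P.dig j (G h)) = fun t => ((p : ℤ) ^ f - 1) * G h t := by
      apply P.eq_of_content_eq
      intro s
      change content p _ s = content p _ s
      rw [rotSum_content, hP, classSum_dig (hG.box h hd)]
      simp only [Profile.n, content, profile]
      ring
    have h1 := rotSum_modEq p L (fun j => P.dig j (G h)) (-1 : ZMod f)
    rw [e] at h1
    simp only [sub_self, ZMod.val_zero, pow_zero, one_mul] at h1
    exact (dvd_sub_right (dvd_mul_right _ _)).1 h1
  have hgood : Good p f d L dg μ₀ := by
    refine ⟨fun j hj => ?_, fun i hi => ?_, fun i hi => ?_⟩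
    · have h1 := hpart j d le_rfl
      have h2 : P.dig j (G d) ≤ dg j := dig_le (hG.box d le_rfl) hj
      have h3 : (μ₀ j d : ℤ) = dg j - P.dig j (G d) := by
        simp only [hμ₀, lt_irrefl, if_false]
        omega
      unfold partialSum at h1
      rw [Finset.sum_range_succ]
      zify
      rw [h1, h3]; ring
    · have hne : G (i + 1) ≠ G i := by
        intro h1
        have := hG.lt i hi 0
        rw [h1] at this
        omega
      obtain ⟨j, hj⟩ := P.exists_dig_ne (hG.box (i + 1) hi) (hG.box i hi.le) hne
      have hjL : j < L := by
        by_contra! hc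
        exact hj (by rw [dig_eq_zero' (hG.box (i + 1) hi) hc, dig_eq_zero' (hG.box i hi.le) hc])
      apply Finset.sum_pos'
      · intro j _; positivity
      · refine ⟨j, Finset.mem_range.2 hjL, ?_⟩
        have h1 := hstep j i hi
        have : 0 < μ₀ j i := by omega
        positivity
    · have h1 := dvd_sub (hcostdvd (i + 1) hi) (hcostdvd i hi.le)
      rw [← Finset.sum_sub_distrib] at h1
      zify [Nat.one_le_pow f p (by omega)]
      have e : ∑ j ∈ Finset.range L, (μ₀ j i : ℤ) * (p : ℤ) ^ j =
          ∑ j ∈ Finset.range L,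
            (P.dig j (G (i + 1)) * (p : ℤ) ^ j - P.dig j (G i) * (p : ℤ) ^ j) :=
        Finset.sum_congr rfl fun j _ => by rw [hstep j i hi]; ring
      rw [e]
      exact h1
  refine ⟨μ₀, hgood, fun μ hμ hdeg => ?_⟩
  obtain ⟨B, hB, hBn⟩ := hμ.chain (hp := hp) (hdg := hdg)
  rw [← hP] at hB hBn
  have hx0 : ∀ h j, j < L → 0 ≤ partialSum μ h j := fun h j _ =>
    Finset.sum_nonneg fun _ _ => by positivity
  have hx : ∀ h, h ≤ d → ∀ j, j < L → partialSum μ h j ≤ dg j := by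
    intro h hd j hj
    rw [← hμ.row j hj]
    push_cast
    exact Finset.sum_le_sum_of_subset_of_nonneg (Finset.range_subset_range.2 (by omega))
      fun _ _ _ => by positivity
  have hcost := fun h hd => cost_le_of_content (hB.box h hd) (hx0 h) (hx h hd) (hBn h hd)
  rw [← hP] at hcost
  have e1 := hμ.sum_index
  have e2 := hgood.sum_index
  rw [hdeg] at e1
  have e3 : ∑ h ∈ Finset.Icc 1 d, ∑ j ∈ Finset.range L, partialSum μ₀ h j * (p : ℤ) ^ j
      = P.total d G := by
    apply Finset.sum_congr rfl
    intro h hh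
    rw [Finset.mem_Icc] at hh
    rw [hP, cost_eq_digits (hG.box h hh.2)]
    apply Finset.sum_congr rfl
    intro j _
    rw [hpart j h hh.2]
  have e4 : ∀ h ∈ Finset.Icc 1 d, P.cost (B h) ≤
      ∑ j ∈ Finset.range L, partialSum μ h j * (p : ℤ) ^ j := fun h hh =>
    (hcost h (Finset.mem_Icc.1 hh).2).1
  have e5 : P.total d B ≤ ∑ h ∈ Finset.Icc 1 d, ∑ j ∈ Finset.range L,
      partialSum μ h j * (p : ℤ) ^ j := Finset.sum_le_sum e4
  obtain ⟨u1, u2⟩ := huniq B hB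
  have hBG := u2 (by linarith)
  have e6 : P.total d B = ∑ h ∈ Finset.Icc 1 d, ∑ j ∈ Finset.range L,
      partialSum μ h j * (p : ℤ) ^ j := by linarith
  have e7 := (Finset.sum_eq_sum_iff_of_le e4).1 e6
  have hxeq : ∀ h, h ≤ d → ∀ j, j < L → partialSum μ h j = P.dig j (G h) := by
    intro h hd j hj
    rcases Nat.eq_zero_or_pos h with rfl | h1
    · rw [dig0]; simp [partialSum]
    · rw [← hBG h hd]
      exact (hcost h hd).2 (e7 h (Finset.mem_Icc.2 ⟨h1, hd⟩)).symm j hj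
  intro j hj i hi
  rcases hi.lt_or_eq with hi | rfl
  · have h1 := hxeq (i + 1) hi j hj
    have h2 := hxeq i hi.le j hj
    have h3 := hstep j i hi
    have e : partialSum μ (i + 1) j = partialSum μ i j + μ j i := Finset.sum_range_succ _ _
    omega
  · have h1 := hxeq i le_rfl j hj
    have h2 := hpart j i le_rfl
    have h3 := hμ.row j hj
    have h4 := hgood.row j hj
    rw [Finset.sum_range_succ] at h3 h4
    unfold partialSum at h1 h2
    zify at h3 h4 ⊢
    linarith
end
end Sheats

/-! ### Base-`q` digit sums as rotated digit sums -/

namespace Sheats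

theorem mod_pow_eq_sum (p n L : ℕ) :
    n % p ^ L = ∑ j ∈ Finset.range L, (n / p ^ j % p) * p ^ j := by
  induction L with
  | zero => simp [Nat.mod_one]
  | succ L ih => rw [Finset.sum_range_succ, ← ih, Nat.mod_pow_succ, mul_comm (p ^ L)]

theorem digits_sum_aux {p f : ℕ} (hp : 2 ≤ p) (hf : f ≠ 0) (T : ℕ) :
    ∀ n, n < (p ^ f) ^ T → (Nat.digits (p ^ f) n).sum =
      ∑ j ∈ Finset.range (f * T), (n / p ^ j % p) * p ^ (j % f) := by
  have hq : 1 < p ^ f := Nat.one_lt_pow hf (by omega)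
  induction T with
  | zero => intro n hn; simp at hn; simp [hn]
  | succ T ih =>
    intro n hn
    have e : (Nat.digits (p ^ f) n).sum = n % p ^ f + (Nat.digits (p ^ f) (n / p ^ f)).sum := by
      rcases Nat.eq_zero_or_pos n with rfl | h
      · simp
      · rw [Nat.digits_def' hq h, List.sum_cons]
    rw [e, ih (n / p ^ f) (Nat.div_lt_of_lt_mul (by rwa [← pow_succ'])), mod_pow_eq_sum,
      mul_add, mul_one, add_comm (f * T), Finset.sum_range_add]
    congr 1
    · exact Finset.sum_congr rfl fun j hj => by rw [Nat.mod_eq_of_lt (Finset.mem_range.1 hj)]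
    · apply Finset.sum_congr rfl
      intro j _
      rw [Nat.add_mod_left, pow_add, Nat.div_div_eq_div_mul]

theorem digits_sum {p f : ℕ} (hp : 2 ≤ p) (hf : f ≠ 0) {n R : ℕ} (hn : n < p ^ R) :
    (Nat.digits (p ^ f) n).sum = ∑ j ∈ Finset.range R, (n / p ^ j % p) * p ^ (j % f) := by
  have h1 : R ≤ f * R := Nat.le_mul_of_pos_left _ (by omega)
  rw [digits_sum_aux hp hf R n
    (by rw [← pow_mul]; exact hn.trans_le (Nat.pow_le_pow_right (by omega) h1))]
  symm
  apply Finset.sum_subset (Finset.range_subset_range.2 h1)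
  intro j _ hj
  rw [Finset.mem_range, not_lt] at hj
  rw [Nat.div_eq_of_lt (hn.trans_le (Nat.pow_le_pow_right (by omega) hj))]
  simp

/-- The base-`p ^ f` digit sum of `k * p ^ i` in terms of the base-`p` digits of `k`. -/
theorem digits_sum_shift {p f : ℕ} (hp : 2 ≤ p) (hf : f ≠ 0) {k L : ℕ} (hk : k < p ^ L) (i : ℕ) :
    (Nat.digits (p ^ f) (k * p ^ i)).sum =
      ∑ j ∈ Finset.range L, (k / p ^ j % p) * p ^ ((i + j) % f) := by
  have hpi : 0 < p ^ i := pow_pos (by omega) _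
  rw [digits_sum hp hf (R := i + L) (by rw [pow_add, mul_comm]; exact Nat.mul_lt_mul_of_pos_left hk hpi),
    Finset.sum_range_add]
  have h0 : ∑ j ∈ Finset.range i, (k * p ^ i / p ^ j % p) * p ^ (j % f) = 0 := by
    apply Finset.sum_eq_zero
    intro j hj
    rw [Finset.mem_range] at hj
    obtain ⟨c, rfl⟩ := Nat.exists_eq_add_of_lt hj
    have : k * p ^ (j + c + 1) = p ^ j * (p * (k * p ^ c)) := by ring
    rw [this, Nat.mul_div_cancel_left _ (pow_pos (by omega) _), Nat.mul_mod_right, zero_mul]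
  rw [h0, zero_add]
  apply Finset.sum_congr rfl
  intro j _
  rw [pow_add, mul_comm k, Nat.mul_div_mul_left _ _ hpi]

/-- The rotated digit sums of `k` are the base-`q` digit sums of the numbers `k * p ^ i`. -/
theorem rotSum_eq_digits {p f : ℕ} [NeZero f] (hp : 2 ≤ p) {k L : ℕ} (hk : k < p ^ L) (i : ℕ) :
    rotSum p L (fun j => ((k / p ^ j % p : ℕ) : ℤ)) (-1 - (i : ZMod f)) =
      ((Nat.digits (p ^ f) (k * p ^ i)).sum : ℤ) := by
  rw [digits_sum_shift hp (NeZero.ne f) hk]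
  unfold rotSum
  push_cast
  apply Finset.sum_congr rfl
  intro j _
  have : (j : ZMod f) - 1 - (-1 - i) = ((i + j : ℕ) : ZMod f) := by push_cast; ring
  rw [this, ZMod.val_natCast]
end Sheats

/-! ### Expansion of the power sum -/

namespace Sheats
section
variable {F : Type} [Field F] [Fintype F]

theorem sum_pow_ne_zero_iff (M : ℕ) :
    (∑ x : F, x ^ M) ≠ 0 ↔ 0 < M ∧ Fintype.card F - 1 ∣ M := by
  rcases Nat.eq_zero_or_pos M with rfl | hM
  · simp
  · have h : ∑ x : F, x ^ M = ∑ x : Fˣ, (x : F) ^ M := by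
      rw [← Finset.sum_subset (Finset.subset_univ (Finset.univ.erase (0 : F)))
        (fun x _ hx => by
          have : x = 0 := by simpa using hx
          rw [this, zero_pow hM.ne'])]
      symm
      apply Finset.sum_bij (fun (u : Fˣ) _ => (u : F))
      · intro u _; simp
      · intro u _ v _ h; exact Units.ext h
      · intro x hx; exact ⟨Units.mk0 x (by simpa using hx), by simp, rfl⟩
      · intro u _; rfl
    rw [h, FiniteField.sum_pow_units]
    split_ifs with hd <;> simp [hM, hd]

/-- The exponent of the `i`-th summand in the term indexed by `m`. -/
def expo (p : ℕ) {L : ℕ} (m : Fin L → ℕ → ℕ) (i : ℕ) : ℕ := ∑ j : Fin L, m j i * p ^ (j : ℕ)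

/-- The coefficient of the term indexed by `m` after summation over all monic polynomials: the product
of the multinomial coefficients and of the power sums over `F` of the free coefficients. -/
noncomputable def coef (F : Type) [Field F] [Fintype F] (p d : ℕ) {L : ℕ} (m : Fin L → ℕ → ℕ) : F :=
  (∏ j : Fin L, (Nat.multinomial (Finset.range (d + 1)) (m j) : F)) *
    ∏ i : Fin d, ∑ x : F, x ^ expo p m i

/-- Expansion of a `k`-th power in characteristic `p` through the base-`p` digits of `k`: a Frobenius
power and a multinomial expansion for each digit. -/
theorem pow_expand {p : ℕ} [Fact p.Prime] [CharP F p] {k L : ℕ} (hk : k < p ^ L)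
    (d : ℕ) (b : ℕ → F[X]) :
    (∑ i ∈ Finset.range (d + 1), b i) ^ k =
      ∑ m ∈ Fintype.piFinset (fun j : Fin L =>
          Finset.piAntidiag (Finset.range (d + 1)) (k / p ^ (j : ℕ) % p)),
        (∏ j : Fin L, (Nat.multinomial (Finset.range (d + 1)) (m j) : F[X])) *
          ∏ i ∈ Finset.range (d + 1), b i ^ expo p m i := by
  have e : k = ∑ j : Fin L, p ^ (j : ℕ) * (k / p ^ (j : ℕ) % p) := by
    rw [Finset.sum_fin_eq_sum_range]
    conv_lhs => rw [← Nat.mod_eq_of_lt hk, mod_pow_eq_sum]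
    apply Finset.sum_congr rfl
    intro j hj
    rw [dif_pos (Finset.mem_range.1 hj), mul_comm]
  conv_lhs => rw [e, ← Finset.prod_pow_eq_pow_sum]
  simp_rw [pow_mul, sum_pow_char_pow, Finset.sum_pow_eq_sum_piAntidiag]
  rw [Finset.prod_univ_sum]
  apply Finset.sum_congr rfl
  intro m _
  rw [Finset.prod_mul_distrib]
  congr 1
  rw [Finset.prod_comm]
  apply Finset.prod_congr rfl
  intro i _
  unfold expo
  rw [← Finset.prod_pow_eq_pow_sum]
  apply Finset.prod_congr rfl
  intro j _
  rw [← pow_mul, mul_comm]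

theorem powerSum_expand {p : ℕ} [Fact p.Prime] [CharP F p] {k L : ℕ} (hk : k < p ^ L) (d : ℕ) :
    powerSum F d k =
      ∑ m ∈ Fintype.piFinset (fun j : Fin L =>
          Finset.piAntidiag (Finset.range (d + 1)) (k / p ^ (j : ℕ) % p)),
        C (coef F p d m) * X ^ (∑ i ∈ Finset.range (d + 1), i * expo p m i) := by
  have h1 : ∀ c : Fin d → F, monicPoly F d c =
      ∑ i ∈ Finset.range (d + 1), C (if h : i < d then c ⟨i, h⟩ else 1) * X ^ i := by
    intro c
    rw [Finset.sum_range_succ, Finset.sum_range, monicPoly, add_comm]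
    simp
  unfold powerSum
  simp_rw [h1, pow_expand hk]
  rw [Finset.sum_comm]
  apply Finset.sum_congr rfl
  intro m _
  rw [← Finset.mul_sum]
  have h2 : ∀ c : Fin d → F, ∏ i ∈ Finset.range (d + 1),
      (C (if h : i < d then c ⟨i, h⟩ else 1) * X ^ i : F[X]) ^ expo p m i =
      C (∏ i : Fin d, c i ^ expo p m i) * X ^ (∑ i ∈ Finset.range (d + 1), i * expo p m i) := by
    intro c
    simp_rw [mul_pow, Finset.prod_mul_distrib, ← pow_mul]
    rw [Finset.prod_pow_eq_pow_sum]
    congr 1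
    rw [Finset.prod_range_succ, Finset.prod_range]
    simp [map_prod]
  simp_rw [h2]
  rw [← Finset.sum_mul, ← map_sum, ← mul_assoc]
  congr 1
  unfold coef
  rw [map_mul, map_prod, Finset.prod_univ_sum, Fintype.piFinset_univ]
  simp

/-- The multinomial coefficients are units in `F` because they divide factorials of digits, which are
less than `p`; so only the power sums over `F` can vanish. -/
theorem coef_ne_zero_iff {p f d k L : ℕ} [Fact p.Prime] [CharP F p]
    (hF : Fintype.card F = p ^ f) {m : Fin L → ℕ → ℕ}
    (hm : m ∈ Fintype.piFinset (fun j : Fin L =>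
          Finset.piAntidiag (Finset.range (d + 1)) (k / p ^ (j : ℕ) % p))) :
    coef F p d m ≠ 0 ↔
      Good p f d L (fun j => k / p ^ j % p) (fun j i => if h : j < L then m ⟨j, h⟩ i else 0) := by
  have hrow : ∀ j : Fin L, ∑ i ∈ Finset.range (d + 1), m j i = k / p ^ (j : ℕ) % p := fun j =>
    (Finset.mem_piAntidiag.1 (Fintype.mem_piFinset.1 hm j)).1
  have hmul : ∏ j : Fin L, (Nat.multinomial (Finset.range (d + 1)) (m j) : F) ≠ 0 := by
    rw [Finset.prod_ne_zero_iff]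
    intro j _ h0
    rw [CharP.cast_eq_zero_iff F p] at h0
    have h1 := h0.trans (Dvd.intro_left _ (Nat.multinomial_spec (Finset.range (d + 1)) (m j)))
    rw [hrow, (Fact.out : p.Prime).dvd_factorial] at h1
    exact absurd (Nat.mod_lt (k / p ^ (j : ℕ)) (Fact.out : p.Prime).pos) (not_lt.2 h1)
  have hexpo : ∀ i, ∑ j ∈ Finset.range L, (if h : j < L then m ⟨j, h⟩ i else 0) * p ^ j =
      expo p m i := by
    intro i
    rw [Finset.sum_range]
    simp [expo]
  unfold coef
  rw [mul_ne_zero_iff, and_iff_right hmul, Finset.prod_ne_zero_iff]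
  have hiff : ∀ M : ℕ, (∑ x : F, x ^ M) ≠ 0 ↔ 0 < M ∧ p ^ f - 1 ∣ M := fun M => by
    rw [sum_pow_ne_zero_iff, hF]
  constructor
  · intro h'
    have h := fun i hi => (hiff _).1 (h' i hi)
    refine ⟨fun j hj => ?_, fun i hi => ?_, fun i hi => ?_⟩
    · simp only [dif_pos hj]
      exact hrow ⟨j, hj⟩
    · rw [hexpo]; exact (h ⟨i, hi⟩ (Finset.mem_univ _)).1
    · rw [hexpo]; exact (h ⟨i, hi⟩ (Finset.mem_univ _)).2
  · intro h
    refine fun i _ => (hiff _).2 ⟨?_, ?_⟩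
    · rw [← hexpo]; exact h.pos i i.2
    · rw [← hexpo]; exact h.dvd i i.2

theorem powerSum_eq_zero_iff {p f d k L : ℕ} [NeZero f] [Fact p.Prime] [CharP F p]
    (hF : Fintype.card F = p ^ f) (hk : k < p ^ L) :
    powerSum F d k = 0 ↔ ∃ t : ZMod f,
      rotSum p L (fun j => ((k / p ^ j % p : ℕ) : ℤ)) t < (d : ℤ) * ((p : ℤ) ^ f - 1) := by
  have hp : 2 ≤ p := (Fact.out : p.Prime).two_le
  rw [powerSum_expand hk]
  constructor
  · intro h0
    by_contra! hc
    obtain ⟨μ₀, hgood, huniq⟩ := exists_unique_good (f := f) hp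
      (fun j => Nat.mod_lt (k / p ^ j) (by omega)) hc
    -- members of `piAntidiag` vanish outside `range (d + 1)`, so `μ₀` has to be truncated
    set m₀ : Fin L → ℕ → ℕ := fun j i => if i ≤ d then μ₀ j i else 0 with hm₀
    have hmem : m₀ ∈ Fintype.piFinset (fun j : Fin L =>
          Finset.piAntidiag (Finset.range (d + 1)) (k / p ^ (j : ℕ) % p)) := by
      rw [Fintype.mem_piFinset]
      intro j
      rw [Finset.mem_piAntidiag]
      constructor
      · rw [← hgood.row j j.2]
        apply Finset.sum_congr rfl
        intro i hi
        rw [Finset.mem_range] at hi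
        simp [hm₀, show i ≤ d by omega]
      · intro i hi
        simp only [hm₀] at hi
        rw [Finset.mem_range]
        split_ifs at hi with h
        · omega
        · exact absurd rfl hi
    have hexpo : ∀ i, i ≤ d → expo p m₀ i = ∑ j ∈ Finset.range L, μ₀ j i * p ^ j := by
      intro i hi
      rw [Finset.sum_range]
      simp [expo, hm₀, hi]
    have hexpo' : ∀ (m : Fin L → ℕ → ℕ) i,
        ∑ j ∈ Finset.range L, (if h : j < L then m ⟨j, h⟩ i else 0) * p ^ j = expo p m i := by
      intro m i
      rw [Finset.sum_range]
      simp [expo]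
    have hne : coef F p d m₀ ≠ 0 := by
      rw [coef_ne_zero_iff hF hmem]
      refine ⟨fun j hj => ?_, fun i hi => ?_, fun i hi => ?_⟩
      · simp only [dif_pos hj]
        exact (Finset.mem_piAntidiag.1 (Fintype.mem_piFinset.1 hmem ⟨j, hj⟩)).1
      · rw [hexpo', hexpo i hi.le]; exact hgood.pos i hi
      · rw [hexpo', hexpo i hi.le]; exact hgood.dvd i hi
    have h1 := congrArg (fun P : F[X] =>
      P.coeff (∑ i ∈ Finset.range (d + 1), i * expo p m₀ i)) h0
    simp only [finsetSum_coeff, coeff_C_mul, coeff_X_pow, coeff_zero] at h1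
    rw [Finset.sum_eq_single m₀] at h1
    · simp at h1
      exact hne h1
    · intro m hm hmne
      by_contra hcon
      rw [mul_eq_zero, not_or] at hcon
      obtain ⟨hc1, hc2⟩ := hcon
      have hdeg : ∑ i ∈ Finset.range (d + 1), i * expo p m₀ i =
          ∑ i ∈ Finset.range (d + 1), i * expo p m i := by
        by_contra h; simp [h] at hc2
      apply hmne
      have hu := huniq _ ((coef_ne_zero_iff hF hm).1 hc1) (by
        simp_rw [hexpo']
        rw [← hdeg]
        apply Finset.sum_congr rfl
        intro i hi
        rw [hexpo i (by rw [Finset.mem_range] at hi; omega)])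
      funext j i
      by_cases hi : i ≤ d
      · have := hu j j.2 i hi
        simpa [hm₀, hi] using this
      · simp only [hm₀, if_neg hi]
        by_contra h
        have := (Finset.mem_piAntidiag.1 (Fintype.mem_piFinset.1 hm j)).2 i h
        rw [Finset.mem_range] at this
        omega
    · exact fun h => absurd hmem h
  · rintro ⟨t, ht⟩
    apply Finset.sum_eq_zero
    intro m hm
    by_cases h : coef F p d m = 0
    · rw [h]; simp
    · exact absurd (((coef_ne_zero_iff hF hm).1 h).rotSum_ge hp t) (not_le.2 ht)

end
end Sheats

theorem stmt5 (p f q : ℕ) (hp : p.Prime) (hf : 0 < f) (hq : q = p ^ f)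
    (F : Type) [Field F] [Fintype F] (hF : Fintype.card F = q)
    (d k : ℕ) (hk : 0 < k) :
    powerSum F d k = 0 ↔ Lval q p f k < (d : ℚ) := by
  subst hq
  have : NeZero f := ⟨hf.ne'⟩
  have : Fact p.Prime := ⟨hp⟩
  have : CharP F p := charP_of_card_eq_prime_pow hF
  have hkL : k < p ^ k := Nat.lt_pow_self hp.one_lt
  have hq1 : (0 : ℚ) < ((p ^ f : ℕ) : ℚ) - 1 := by
    have : 1 < p ^ f := Nat.one_lt_pow hf.ne' hp.one_lt
    have : (1 : ℚ) < ((p ^ f : ℕ) : ℚ) := by exact_mod_cast this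
    linarith
  have hcmp : ∀ i : ℕ, ((Nat.digits (p ^ f) (k * p ^ i)).sum : ℚ) / (((p ^ f : ℕ) : ℚ) - 1) < d ↔
      Sheats.rotSum p k (fun j => ((k / p ^ j % p : ℕ) : ℤ)) (-1 - (i : ZMod f)) <
        (d : ℤ) * ((p : ℤ) ^ f - 1) := by
    intro i
    rw [div_lt_iff₀ hq1, Sheats.rotSum_eq_digits hp.two_le hkL]
    generalize (Nat.digits (p ^ f) (k * p ^ i)).sum = s
    rw [← Int.cast_lt (R := ℚ)]
    push_cast
    rfl
  rw [Sheats.powerSum_eq_zero_iff hF hkL]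
  refine Iff.trans ?_ (Finset.inf'_lt_iff _).symm
  constructor
  · rintro ⟨t, ht⟩
    refine ⟨(-1 - t).val, ?_, ?_⟩
    · have := ZMod.val_lt (-1 - t)
      rw [Finset.mem_Icc]; omega
    · rw [hcmp, ZMod.natCast_zmod_val, sub_sub_cancel]
      exact ht
  · rintro ⟨i, -, hi⟩
    exact ⟨_, (hcmp i).1 hi⟩
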